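/- Let k > 22 and let H be a nonsplit extension 1 → M → H → A_k → 1 with M ≠ 1 and gcd(2k, |M|) = 1. Then the minimal degree P(H) of a faithful permutation representation of H satisfies P(H) ≥ k(k-1)(k-2)/2. -/

import Mathlib

open Equiv Equiv.Perm
set_option linter.unusedSectionVars false
set_option linter.unusedVariables false


/-- commutator of two permutations whose supports meet in one point -/
lemma aux_comm {α : Type*} [DecidableEq α] (x y : Perm α) (d : α)
    (h : ∀ z, z ≠ d → x z = z ∨ y z = z) (hx : x d ≠ d) (hy : y d ≠ d) :
    (x d ≠ y d) ∧ x * y * x⁻¹ * y⁻¹ = swap (y d) d * swap d (x d) := by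
  have hxy : x (y d) = y d := (h _ hy).resolve_right (fun e => hy (y.injective e))
  have hyx : y (x d) = x d := (h _ hx).resolve_left (fun e => hx (x.injective e))
  have hne : x d ≠ y d := by
    intro e; rw [e] at hyx; exact hy (y.injective hyx)
  refine ⟨hne, ?_⟩
  rw [mul_inv_eq_iff_eq_mul, mul_inv_eq_iff_eq_mul]
  ext z
  simp only [Perm.mul_apply]
  have C1 : swap (y d) d (swap d (x d) (x d)) = y d := by simp
  have C2 : swap (y d) d (swap d (x d) (y d)) = d := by
    rw [swap_apply_of_ne_of_ne hy hne.symm]; simp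
  have C3 : swap (y d) d (swap d (x d) d) = x d := by
    simp [swap_apply_of_ne_of_ne hne hx]
  have C4 : ∀ w, w ≠ d → w ≠ x d → w ≠ y d → swap (y d) d (swap d (x d) w) = w := by
    intro w h1 h2 h3
    rw [swap_apply_of_ne_of_ne h1 h2, swap_apply_of_ne_of_ne h3 h1]
  by_cases hz : z = d
  · subst hz
    rw [hxy, hyx, C1]
  by_cases hxz : x z = z
  · rw [hxz]
    by_cases hyz : y z = d
    · rw [hyz, C3]
    rw [C4 _ hyz]
    · by_cases e : y z = z
      · rw [e, hxz]
      · exact (h _ hyz).resolve_right (fun e' => e (y.injective e'))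
    · intro e
      have : z = x d := y.injective (e.trans hyx.symm)
      rw [this] at hxz
      exact hx (x.injective hxz)
    · intro e; exact hz (y.injective e)
  · have hyz := (h _ hz).resolve_left hxz
    rw [hyz]
    by_cases hxd : x z = d
    · rw [hxd, C2]
    have := (h _ hxd).resolve_left (fun e => hxz (x.injective e))
    rw [this, C4 _ hxd]
    · intro e; exact hz (x.injective e)
    · intro e
      have : z = y d := x.injective (e.trans hxy.symm)
      rw [this] at hyz
      exact hy (y.injective hyz)

/-- `L` contains the 3-cycle `a → b → c → a`. -/
def Cyc {α : Type*} [DecidableEq α] [Fintype α] (L : Subgroup (alternatingGroup α)) (a b c : α) : Prop :=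
  swap a b * swap b c ∈ L.map (alternatingGroup α).subtype

/-- Bochert's argument: a subgroup of small index contains a 3-cycle. -/
lemma bochert {α : Type*} [DecidableEq α] [Fintype α] (L : Subgroup (alternatingGroup α))
    (hcard : 3 ≤ Fintype.card α)
    (hL : 2 * L.index < ((Fintype.card α + 1) / 2).factorial) :
    ∃ a b c : α, a ≠ b ∧ b ≠ c ∧ a ≠ c ∧ Cyc L a b c := by
  classical
  -- minimal base
  let isB : Finset α → Prop := fun D => ∀ g ∈ L, (∀ x ∈ D, (g : Perm α) x = x) → g = 1
  have hex : ∃ n, ∃ D : Finset α, D.card = n ∧ isB D :=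
    ⟨_, Finset.univ, rfl, fun g _ h => Subtype.ext (Equiv.ext fun x => h x (Finset.mem_univ _))⟩
  obtain ⟨D, hDc, hD⟩ := Nat.find_spec hex
  have hmin : ∀ D' : Finset α, D'.card < D.card → ¬ isB D' := by
    intro D' h h'
    rw [hDc] at h
    exact Nat.find_min hex h ⟨D', rfl, h'⟩
  by_cases hb : 2 * D.card ≤ Fintype.card α
  · exfalso
    have hcompl : Dᶜ.card = Fintype.card α - D.card := Finset.card_compl D
    have hge : (Fintype.card α + 1) / 2 ≤ Dᶜ.card := by omega
    have : Nontrivial (Dᶜ : Finset α) := by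
      rw [← Fintype.one_lt_card_iff_nontrivial, Fintype.card_coe]; omega
    have h1 := two_mul_nat_card_alternatingGroup (α := (Dᶜ : Finset α))
    have h2 : Nat.card (alternatingGroup (Dᶜ : Finset α)) ≤ L.index := by
      rw [Subgroup.index_eq_card]
      refine Nat.card_le_card_of_injective
        (fun g => (QuotientGroup.mk (alternatingGroup.ofSubtype Dᶜ g) : alternatingGroup α ⧸ L)) ?_
      intro g h e
      rw [QuotientGroup.eq] at e
      rw [← map_inv, ← map_mul] at e
      have := hD _ e (by
        intro x hx
        rw [alternatingGroup.coe_ofSubtype]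
        exact ofSubtype_apply_of_not_mem _ (by simpa using hx))
      rw [← map_one (alternatingGroup.ofSubtype Dᶜ)] at this
      exact inv_mul_eq_one.mp (alternatingGroup.ofSubtype_injective this)
    have h3 : Nat.card (Perm (Dᶜ : Finset α)) = (Dᶜ.card).factorial := by
      rw [Nat.card_perm, Nat.card_eq_fintype_card, Fintype.card_coe]
    have := Nat.factorial_le hge
    omega
  · have hcompl : Dᶜ.card = Fintype.card α - D.card := Finset.card_compl D
    have h1 := hmin Dᶜ (by omega)
    simp only [isB, not_forall] at h1
    obtain ⟨x, hxL, hx, hx1⟩ := h1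
    have : ∃ d, (x : Perm α) d ≠ d := by
      by_contra hc; push Not at hc
      exact hx1 (Subtype.ext (Equiv.ext hc))
    obtain ⟨d, hd⟩ := this
    have hdD : d ∈ D := by
      by_contra hc; exact hd (hx d (by simpa using hc))
    have h2 := hmin (D.erase d) (Finset.card_erase_lt_of_mem hdD)
    simp only [isB, not_forall] at h2
    obtain ⟨y, hyL, hy, hy1⟩ := h2
    have hyd : (y : Perm α) d ≠ d := by
      intro e
      refine hy1 (hD y hyL fun z hz => ?_)
      by_cases h : z = d
      · rw [h, e]
      · exact hy z (Finset.mem_erase.2 ⟨h, hz⟩)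
    obtain ⟨hne, hc⟩ := aux_comm (x : Perm α) y d (by
      intro z hz
      by_cases h : z ∈ D
      · exact Or.inr (hy z (Finset.mem_erase.2 ⟨hz, h⟩))
      · exact Or.inl (hx z (by simpa using h))) hd hyd
    refine ⟨(y : Perm α) d, d, (x : Perm α) d, hyd, hd.symm, hne.symm, ?_⟩
    rw [Cyc, ← hc]
    exact ⟨x * y * x⁻¹ * y⁻¹, L.mul_mem (L.mul_mem (L.mul_mem hxL hyL) (L.inv_mem hxL))
      (L.inv_mem hyL), rfl⟩

lemma Cyc.conj {α : Type*} [DecidableEq α] [Fintype α] {L : Subgroup (alternatingGroup α)} {a b c : α}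
    (h : Cyc L a b c) {g : Perm α} (hg : g ∈ L.map (alternatingGroup α).subtype) :
    Cyc L (g a) (g b) (g c) := by
  have : swap (g a) (g b) * swap (g b) (g c) = g * (swap a b * swap b c) * g⁻¹ := by
    rw [Equiv.swap_apply_apply, Equiv.swap_apply_apply]
    group
  rw [Cyc, this]
  exact Subgroup.mul_mem _ (Subgroup.mul_mem _ hg h) (Subgroup.inv_mem _ hg)


section cyc
variable {α : Type*} [DecidableEq α] [Fintype α] {L : Subgroup (alternatingGroup α)} {a b c d e : α}

lemma Cyc.symm (h : Cyc L a b c) : Cyc L c b a := by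
  have := Subgroup.inv_mem _ h
  rwa [mul_inv_rev, swap_inv, swap_inv, swap_comm b c, swap_comm a b] at this

lemma rot_eq (hab : a ≠ b) (hbc : b ≠ c) (hac : a ≠ c) :
    swap a b * swap b c = swap b c * swap c a := by
  have := Equiv.swap_apply_apply (swap b c) c a
  rw [swap_apply_right, swap_apply_of_ne_of_ne hab hac, swap_inv] at this
  rw [swap_comm a b, this]
  simp [mul_assoc]

lemma Cyc.rot (h : Cyc L a b c) (hab : a ≠ b) (hbc : b ≠ c) (hac : a ≠ c) : Cyc L b c a := by
  rw [Cyc, ← rot_eq hab hbc hac]; exact h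

lemma cyc_app1 (hab : a ≠ b) (hac : a ≠ c) : (swap a b * swap b c) a = b := by
  simp [swap_apply_of_ne_of_ne hab hac]
lemma cyc_app2 (hbc : b ≠ c) (hac : a ≠ c) : (swap a b * swap b c) b = c := by
  simp [swap_apply_of_ne_of_ne hac.symm hbc.symm]
lemma cyc_app3 : (swap a b * swap b c) c = a := by simp
lemma cyc_app4 (h1 : d ≠ a) (h2 : d ≠ b) (h3 : d ≠ c) : (swap a b * swap b c) d = d := by
  simp [swap_apply_of_ne_of_ne h2 h3, swap_apply_of_ne_of_ne h1 h2]

/-- linked by a 3-cycle of `L` -/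
def Lk (L : Subgroup (alternatingGroup α)) (a b : α) : Prop :=
  a = b ∨ ∃ c, a ≠ b ∧ b ≠ c ∧ a ≠ c ∧ Cyc L a b c

lemma Lk.symm (h : Lk L a b) : Lk L b a := by
  rcases h with h | ⟨c, h1, h2, h3, h⟩
  · exact Or.inl h.symm
  · exact Or.inr ⟨c, h1.symm, h3, h2, h.symm.rot h2.symm h1.symm h3.symm⟩

lemma Lk.trans (h : Lk L a b) (h' : Lk L b d) : Lk L a d := by
  rcases h with h | ⟨c, h1, h2, h3, h⟩
  · rwa [h]
  rcases h' with h' | ⟨e, k1, k2, k3, k⟩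
  · rw [← h']; exact Or.inr ⟨c, h1, h2, h3, h⟩
  by_cases had : a = d
  · exact Or.inl had
  by_cases hae : a = e
  · subst hae
    exact Or.inr ⟨b, had, k1.symm, h1, k.symm⟩
  have ga := cyc_app4 (a := b) (b := d) (c := e) h1 had hae
  have gb := cyc_app1 (a := b) (b := d) (c := e) k1 k3
  have := h.conj k
  rw [ga, gb] at this
  exact Or.inr ⟨_, had, fun e' => h2 (Equiv.injective _ (gb.trans e')),
    fun e' => h3 (Equiv.injective _ (ga.trans e')), this⟩

lemma Lk.conj (h : Lk L a b) {g : Perm α} (hg : g ∈ L.map (alternatingGroup α).subtype) :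
    Lk L (g a) (g b) := by
  rcases h with h | ⟨c, h1, h2, h3, h⟩
  · exact Or.inl (by rw [h])
  · exact Or.inr ⟨g c, g.injective.ne h1, g.injective.ne h2, g.injective.ne h3, h.conj hg⟩

lemma Lk.cyc (hab : a ≠ b) (hbc : b ≠ c) (hac : a ≠ c) (h1 : Lk L a b) (h2 : Lk L b c) :
    Cyc L a b c := by
  obtain ⟨x, -, hbx, hax, hx⟩ := h1.resolve_left hab
  by_cases hxc : x = c
  · rwa [← hxc]
  have hxb : Lk L x b := Or.inr ⟨a, hbx.symm, hab.symm, hax.symm,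
    hx.symm⟩
  obtain ⟨z, -, hcz, hxz, hz⟩ := (hxb.trans h2).resolve_left hxc
  by_cases hza : z = a
  · subst hza
    have := hx.conj hz.symm
    rw [cyc_app1 hac hax, cyc_app3, cyc_app4 hab.symm hbc hbx] at this
    exact this.symm
  by_cases hzb : z = b
  · subst hzb
    have := hx.conj hz.symm
    rw [cyc_app1 hbc hbx, cyc_app3, cyc_app4 hab hac hax] at this
    exact (this.symm.rot hbc hac.symm hab.symm).rot hac.symm hab hbc.symm
  have := hx.conj hz
  rwa [cyc_app4 hax hac (Ne.symm hza), cyc_app4 hbx hbc (Ne.symm hzb), cyc_app1 hxc hxz] at this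

lemma top_of_cyc (h : ∀ a b c, a ≠ b → b ≠ c → a ≠ c → Cyc L a b c) : L = ⊤ := by
  rw [eq_top_iff, ← alternatingGroup.closure_isThreeCycles_eq_top, Subgroup.closure_le]
  intro g hg
  have hg3 : IsThreeCycle (g : Perm α) := hg
  have hne : (g : Perm α).support.Nonempty := by
    rw [← Finset.card_pos, hg3.card_support]; norm_num
  obtain ⟨a, ha⟩ := hne
  have e := hg3.eq_swap_mul_swap_iff_mem_support.2 ha
  have nd := hg3.nodup_iff_mem_support.2 ha
  simp only [List.nodup_cons, List.mem_cons, List.not_mem_nil, or_false, not_or] at nd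
  obtain ⟨⟨h1, h2⟩, h3, -⟩ := nd
  obtain ⟨g', hg', e'⟩ := h a ((g : Perm α) a) ((g : Perm α) ((g : Perm α) a)) h1 h3 h2
  rw [← e] at e'
  have : g' = g := Subtype.ext e'
  rwa [← this]

lemma exists_even_image {S T : Finset α} (h : S.card = T.card) (h2 : 2 ≤ S.card) :
    ∃ g : alternatingGroup α, S.image (g : Perm α) = T := by
  classical
  have e : S ≃ T := Fintype.equivOfCardEq (by simpa using h)
  have key : ∀ g : Perm α, (∀ x ∈ S, g x ∈ T) → S.image g = T := by
    intro g hg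
    apply Finset.eq_of_subset_of_card_le
    · intro y hy
      obtain ⟨x, hx, rfl⟩ := Finset.mem_image.1 hy
      exact hg x hx
    · rw [Finset.card_image_of_injective _ g.injective, h]
  let g : Perm α := Equiv.extendSubtype (p := (· ∈ S)) (q := (· ∈ T)) e
  have hg : ∀ x ∈ S, g x ∈ T := fun x hx => Equiv.extendSubtype_mem e x hx
  rcases Int.units_eq_one_or (sign g) with hs | hs
  · exact ⟨⟨g, hs⟩, key g hg⟩
  · obtain ⟨u, hu, v, hv, huv⟩ := Finset.one_lt_card.1 h2
    refine ⟨⟨g * swap u v, ?_⟩, key _ ?_⟩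
    · rw [mem_alternatingGroup, Perm.sign_mul, hs, sign_swap huv]; rfl
    · intro x hx
      rw [Perm.mul_apply]
      apply hg
      rw [swap_apply_def]
      split_ifs <;> assumption

lemma choose_le_of_orbit (L : Subgroup (alternatingGroup α)) (S : Finset α) (hS : 2 ≤ S.card) (O : Finset (Finset α))
    (hO : ∀ g ∈ L, S.image (g : Perm α) ∈ O) :
    (Fintype.card α).choose S.card ≤ L.index * O.card := by
  classical
  rw [← Finset.card_univ, ← Finset.card_powersetCard, Subgroup.index_eq_card,
    Nat.card_eq_fintype_card, ← Finset.card_univ, ← Finset.card_product]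
  refine Finset.card_le_card_of_surjOn (fun x => x.2.image (x.1.out : Perm α)) ?_
  intro T hT
  have hT' : T.card = S.card := by simpa using hT
  obtain ⟨g, hg⟩ := exists_even_image hT'.symm hS
  have hl : ((QuotientGroup.mk g : alternatingGroup α ⧸ L).out)⁻¹ * g ∈ L := by
    rw [← QuotientGroup.eq, QuotientGroup.out_eq']
  refine ⟨(QuotientGroup.mk g, _), by simpa using hO _ hl, ?_⟩
  simp only [Finset.image_image]
  rw [← hg]
  congr 1
  ext x
  simp
end cyc


lemma six_choose_three (k : ℕ) : 6 * (k+2).choose 3 = (k+2)*(k+1)*k := by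
  have h := Nat.descFactorial_eq_factorial_mul_choose (k+2) 3
  simp [Nat.descFactorial, Nat.factorial] at h
  rw [← h]; ring

lemma choose_four (k : ℕ) : 24 * (k+3).choose 4 = (k+3)*(k+2)*(k+1)*k := by
  have h := Nat.descFactorial_eq_factorial_mul_choose (k+3) 4
  simp [Nat.descFactorial, Nat.factorial] at h
  rw [← h]; ring

lemma fact_bound (c : ℕ) (hc : 11 ≤ c) : 16 * c^3 ≤ c.factorial := by
  induction c, hc using Nat.le_induction with
  | base => decide
  | succ c hc ih =>
    rw [Nat.factorial_succ]
    have : (c+1)^2 ≤ c^3 := by nlinarith [Nat.mul_le_mul_right c (Nat.mul_le_mul_right c hc)]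
    calc 16 * (c+1)^3 = (c+1) * (16 * (c+1)^2) := by ring
      _ ≤ (c+1) * (16 * c^3) := by gcongr
      _ ≤ _ := by gcongr

lemma num1 (k : ℕ) (hk : 21 ≤ k) : 2 * k.choose 3 ≤ ((k+1)/2).factorial := by
  refine le_trans ?_ (fact_bound ((k+1)/2) (by omega))
  have h : k ≤ 2 * ((k+1)/2) := by omega
  generalize (k+1)/2 = c at h
  have h1 := Nat.choose_le_pow_div (α := ℚ) 3 k
  have h2 : (k.choose 3 : ℚ) ≤ k^3 := h1.trans (by
    apply div_le_self (by positivity); simp [Nat.factorial])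
  have h3 : k.choose 3 ≤ k^3 := by exact_mod_cast h2
  have h4 : k^3 ≤ (2*c)^3 := by gcongr
  nlinarith

lemma choose_mono_half (k r d : ℕ) (h : r ≤ d) (hd : 2 * d ≤ k) : k.choose r ≤ k.choose d := by
  induction d, h using Nat.le_induction with
  | base => exact le_rfl
  | succ d h ih =>
    exact (ih (by omega)).trans (Nat.choose_le_succ_of_lt_half_left (by omega))

lemma choose_mono_mid (k r d : ℕ) (h : r ≤ d) (hd : d + r ≤ k) : k.choose r ≤ k.choose d := by
  by_cases h2 : 2 * d ≤ k
  · exact choose_mono_half k r d h h2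
  · rw [← Nat.choose_symm (show d ≤ k by omega)]
    exact choose_mono_half k r _ (by omega) (by omega)

lemma num3 (k d q i : ℕ) (hk : 21 ≤ k) (hd : 5 ≤ d) (hdk : 2 * d ≤ k) (hq : q * d ≤ k)
    (h : k.choose d ≤ i * q) (hi : i < k.choose 3) : False := by
  obtain ⟨m, rfl⟩ : ∃ m, k = m + 4 := ⟨k - 4, by omega⟩
  obtain ⟨e, rfl⟩ : ∃ e, d = e + 1 := ⟨d - 1, by omega⟩
  have h1 := Nat.add_one_mul_choose_eq (m+3) e
  have h2 : (m+4) * (m+3).choose e ≤ i * (m+4) := by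
    rw [h1]
    calc _ ≤ (i * q) * (e+1) := by gcongr
      _ = i * (q * (e+1)) := by ring
      _ ≤ _ := by gcongr
  have h3 : (m+3).choose e ≤ i := by nlinarith
  have h4 := choose_mono_mid (m+3) 4 e (by omega) (by omega)
  have h5 := choose_four m
  have h6 := six_choose_three (m+2)
  have : 24 * (m+4).choose 3 ≤ 24 * (m+3).choose 4 := by
    rw [h5]
    have : 24 * (m+4).choose 3 = 4 * ((m+2+2)*(m+2+1)*(m+2)) := by rw [← h6]; ring
    rw [this]
    have : 4 * (m+4) ≤ (m+1)*m := by nlinarith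
    nlinarith [Nat.mul_le_mul_left ((m+3)*(m+2)) this]
  omega

lemma num4 (k d q i : ℕ) (hk : 21 ≤ k) (hd : d = 3 ∨ d = 4) (hq : q * d ≤ k)
    (h : k.choose (2*d) ≤ i * q.choose 2) (hi : i < k.choose 3) : False := by
  have hq3 : q * 3 ≤ k := by rcases hd with rfl | rfl <;> omega
  have h6 : k.choose 6 ≤ k.choose (2*d) := choose_mono_mid k 6 _ (by omega) (by omega)
  have hc := Nat.choose_mul (n := k) (k := 6) (s := 3) (by norm_num)
  have e1 : Nat.choose 6 3 = 20 := by decide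
  rw [e1] at hc
  simp only [Nat.reduceSub] at hc
  obtain ⟨m, rfl⟩ : ∃ m, k = m + 5 := ⟨k - 5, by omega⟩
  have h7 := six_choose_three m
  simp only [show m + 5 - 3 = m + 2 by omega] at hc
  have hq2 : 2 * q.choose 2 ≤ q * (q - 1) := by
    rw [Nat.choose_two_right]; exact Nat.mul_div_le _ _
  have hpos : 0 < (m+5).choose 3 := Nat.choose_pos (by omega)
  have h8 : (m+5).choose 3 * (m+2).choose 3 ≤ (m+5).choose 3 * (20 * q.choose 2) := by
    rw [← hc]
    calc _ ≤ (i * q.choose 2) * 20 := by gcongr; exact h6.trans h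
      _ = i * (20 * q.choose 2) := by ring
      _ ≤ _ := by gcongr
  have h9 := Nat.le_of_mul_le_mul_left h8 hpos
  have h10 : (m+2)*(m+1)*m ≤ 60 * (q * (q-1)) := by rw [← h7]; nlinarith
  have h11 : 9 * (q * (q-1)) ≤ (m+5) * (m+2) := by
    have a1 : 3 * q ≤ m + 5 := by omega
    have a2 : 3 * (q-1) ≤ m + 2 := by omega
    calc 9 * (q * (q-1)) = (3*q)*(3*(q-1)) := by ring
      _ ≤ _ := Nat.mul_le_mul a1 a2
  have h12 : (m+2) * (9 * ((m+1)*m)) ≤ (m+2) * (60 * (m+5)) := by nlinarith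
  have h13 := Nat.le_of_mul_le_mul_left h12 (by omega)
  nlinarith

section small
variable {α : Type*} [DecidableEq α] [Fintype α]

set_option maxHeartbeats 1000000 in
lemma small_index (L : Subgroup (alternatingGroup α)) (hk : 21 ≤ Fintype.card α)
    (hL : L.index < (Fintype.card α).choose 3) :
    L = ⊤ ∨ (Fintype.card α ≤ L.index ∧ ∃ D : Finset α, Fintype.card α ≤ D.card + 2 ∧
      ∀ a ∈ D, ∀ b ∈ D, ∀ c ∈ D, a ≠ b → b ≠ c → a ≠ c → Cyc L a b c) := by
  classical
  obtain ⟨a0, b0, c0, hab, hbc, hac, h0⟩ := bochert L (by omega)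
    (lt_of_lt_of_le (by omega) (num1 _ hk))
  set k := Fintype.card α with hkdef
  set D : Finset α := Finset.univ.filter (Lk L a0) with hD
  have memD : ∀ x, x ∈ D ↔ Lk L a0 x := by intro x; simp [hD]
  have hcyc : ∀ a ∈ D, ∀ b ∈ D, ∀ c ∈ D, a ≠ b → b ≠ c → a ≠ c → Cyc L a b c := by
    intro a ha b hb c hc h1 h2 h3
    rw [memD] at ha hb hc
    exact Lk.cyc h1 h2 h3 (ha.symm.trans hb) (hb.symm.trans hc)
  have hd3 : 3 ≤ D.card := by
    have : ({a0, b0, c0} : Finset α) ⊆ D := by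
      intro x hx
      simp only [Finset.mem_insert, Finset.mem_singleton] at hx
      rw [memD]
      have hab' : Lk L a0 b0 := Or.inr ⟨c0, hab, hbc, hac, h0⟩
      rcases hx with rfl | rfl | rfl
      · exact Or.inl rfl
      · exact hab'
      · exact hab'.trans (Or.inr ⟨a0, hbc, hac.symm, hab.symm, h0.rot hab hbc hac⟩)
    calc 3 = ({a0, b0, c0} : Finset α).card := (Finset.card_eq_three.2 ⟨_, _, _, hab, hac, hbc, rfl⟩).symm
      _ ≤ _ := Finset.card_le_card this
  have memI : ∀ g ∈ L, ∀ x, x ∈ D.image (g : Perm α) ↔ Lk L ((g : Perm α) a0) x := by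
    intro g hg x
    have hg' : (g : Perm α) ∈ L.map (alternatingGroup α).subtype := ⟨g, hg, rfl⟩
    constructor
    · intro hx
      obtain ⟨y, hy, rfl⟩ := Finset.mem_image.1 hx
      exact ((memD y).1 hy).conj hg'
    · intro hx
      refine Finset.mem_image.2 ⟨(g : Perm α)⁻¹ x, (memD _).2 ?_, by simp⟩
      have := hx.conj (inv_mem hg')
      simpa using this
  let O : Finset (Finset α) := (Finset.univ : Finset L).image (fun g : L => D.image ((g : alternatingGroup α) : Perm α))
  have memO : ∀ g ∈ L, D.image ((g : alternatingGroup α) : Perm α) ∈ O := fun g hg =>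
    Finset.mem_image.2 ⟨(⟨g, hg⟩ : L), Finset.mem_univ _, rfl⟩
  have hDO : D ∈ O := by
    have := memO 1 (one_mem _)
    simpa using this
  have Ocard : ∀ s ∈ O, s.card = D.card := by
    intro s hs
    obtain ⟨g, -, rfl⟩ := Finset.mem_image.1 hs
    exact Finset.card_image_of_injective _ (Equiv.injective _)
  have Odisj : ∀ s ∈ O, ∀ t ∈ O, s ≠ t → Disjoint s t := by
    intro s hs t ht hst
    obtain ⟨g, -, rfl⟩ := Finset.mem_image.1 hs
    obtain ⟨g', -, rfl⟩ := Finset.mem_image.1 ht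
    rw [Finset.disjoint_left]
    intro x hx hx'
    rw [memI _ g.2] at hx
    rw [memI _ g'.2] at hx'
    apply hst
    ext y
    rw [memI _ g.2, memI _ g'.2]
    exact ⟨fun h => hx'.trans (hx.symm.trans h), fun h => hx.trans (hx'.symm.trans h)⟩
  have hqd : O.card * D.card ≤ k := by
    have h1 : (O.biUnion id).card = ∑ s ∈ O, s.card := Finset.card_biUnion Odisj
    rw [Finset.sum_congr rfl Ocard, Finset.sum_const, smul_eq_mul] at h1
    rw [← h1]
    exact Finset.card_le_univ _
  have hidx := choose_le_of_orbit L D (by omega) O memO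
  have hdk : D.card ≤ k := Finset.card_le_univ _
  rcases Nat.lt_or_ge 1 O.card with hq | hq
  · exfalso
    have hdk2 : 2 * D.card ≤ k := le_trans (Nat.mul_le_mul_right _ hq) hqd
    rcases Nat.lt_or_ge D.card 5 with h5 | h5
    · obtain ⟨D', hD', hne⟩ : ∃ D' ∈ O, D' ≠ D := by
        obtain ⟨a, ha, b, hb, hab⟩ := Finset.one_lt_card.1 hq
        by_cases h : a = D
        · exact ⟨b, hb, fun e => hab (h.trans e.symm)⟩
        · exact ⟨a, ha, h⟩
      have hT : (D ∪ D').card = 2 * D.card := by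
        rw [Finset.card_union_of_disjoint (Odisj _ hDO _ hD' hne.symm), Ocard _ hD']; ring
      have imO : ∀ g ∈ L, ∀ s ∈ O, s.image ((g : alternatingGroup α) : Perm α) ∈ O := by
        intro g hg s hs
        obtain ⟨g', -, rfl⟩ := Finset.mem_image.1 hs
        have := memO (g * g') (mul_mem hg g'.2)
        rw [Finset.image_image]
        exact this
      have h6 := choose_le_of_orbit L (D ∪ D') (by omega) ((O.powersetCard 2).image (fun P => P.biUnion id)) (by
        intro g hg
        refine Finset.mem_image.2 ⟨{D.image ((g : alternatingGroup α) : Perm α), D'.image ((g : alternatingGroup α) : Perm α)}, ?_, ?_⟩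
        · rw [Finset.mem_powersetCard]
          constructor
          · intro x hx
            simp only [Finset.mem_insert, Finset.mem_singleton] at hx
            rcases hx with rfl | rfl
            · exact imO g hg _ hDO
            · exact imO g hg _ hD'
          · rw [Finset.card_pair]
            intro e
            exact hne (Finset.image_injective (Equiv.injective _) e).symm
        · rw [Finset.image_union]; simp)
      rw [hT] at h6
      have h7 : ((O.powersetCard 2).image (fun P => P.biUnion id)).card ≤ O.card.choose 2 := by
        refine Finset.card_image_le.trans ?_
        rw [Finset.card_powersetCard]
      exact num4 k D.card O.card L.index hk (by omega) hqd
        (h6.trans (Nat.mul_le_mul_left _ h7)) hL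
    · exact num3 k D.card O.card L.index hk h5 hdk2 hqd hidx hL
  · have hi : k.choose D.card ≤ L.index := hidx.trans (by
      calc _ ≤ L.index * 1 := Nat.mul_le_mul_left _ hq
        _ = _ := mul_one _)
    have hd : k ≤ D.card + 2 := by
      by_contra hcon
      have := choose_mono_mid k 3 D.card hd3 (by omega)
      omega
    by_cases hdk' : D.card = k
    · left
      have : D = Finset.univ := Finset.eq_univ_of_card _ hdk'
      apply top_of_cyc
      intro a b c
      exact hcyc a (by simp [this]) b (by simp [this]) c (by simp [this])
    · right
      refine ⟨le_trans ?_ hi, D, hd, hcyc⟩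
      have := choose_mono_mid k 1 D.card (by omega) (by omega)
      simpa using this

/-- generation by the 3-cycles through two points -/
lemma top_of_cyc_base (L : Subgroup (alternatingGroup α)) (d e : α) (hde : d ≠ e)
    (h : ∀ x, x ≠ d → x ≠ e → Cyc L d e x) (hk : 3 ≤ Fintype.card α) : L = ⊤ := by
  have h1 : ∀ x, Lk L d x := by
    intro x
    by_cases hx : x = d
    · exact Or.inl hx.symm
    by_cases hx' : x = e
    · subst hx'
      obtain ⟨y, hy⟩ : ∃ y, y ∉ ({d, x} : Finset α) := by
        by_contra hcon
        push Not at hcon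
        have : Finset.univ ⊆ ({d, x} : Finset α) := fun z _ => hcon z
        have := Finset.card_le_card this
        rw [Finset.card_univ] at this
        have := Finset.card_le_two (a := d) (b := x)
        omega
      simp only [Finset.mem_insert, Finset.mem_singleton, not_or] at hy
      exact Or.inr ⟨y, hde, Ne.symm hy.2, Ne.symm hy.1, h y hy.1 hy.2⟩
    · exact Or.inr ⟨e, Ne.symm hx, hx', hde,
        ((h x hx hx').symm.rot hx' hde.symm hx).rot hde.symm (Ne.symm hx) (Ne.symm hx')⟩
  apply top_of_cyc
  intro a b c hab hbc hac
  exact Lk.cyc hab hbc hac ((h1 a).symm.trans (h1 b)) ((h1 b).symm.trans (h1 c))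
end small


section triv
variable {β : Type*} [DecidableEq β] [Fintype β] {Q : Type*} [Group Q] [Finite Q]

lemma card_three_mul {A B : Subgroup Q} (h : A < B) (hodd : Odd (Nat.card B)) :
    3 * Nat.card A ≤ Nat.card B := by
  obtain ⟨r, hr⟩ := Subgroup.card_dvd_of_le h.le
  have hApos : 0 < Nat.card A := Nat.card_pos
  have hBpos : 0 < Nat.card B := Nat.card_pos
  have h1 : r ≠ 0 := by rintro rfl; simp at hr; omega
  have h2 : r ≠ 1 := by
    rintro rfl
    exact h.ne (Subgroup.eq_of_le_of_card_ge h.le (by omega))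
  have h3 : r ≠ 2 := by
    rintro rfl
    rw [hr, mul_comm] at hodd
    exact (Nat.not_odd_iff_even.2 (even_two_mul _)) hodd
  have : 3 ≤ r := by omega
  rw [hr, mul_comm]
  exact Nat.mul_le_mul_left _ this

lemma three_pow_bound (j : ℕ) (hj : 21 ≤ j) : (j + 1) * j ≤ 2 * 3 ^ (j - 4) := by
  induction j, hj using Nat.le_induction with
  | base => norm_num
  | succ j hj ih =>
    have : j + 1 - 4 = (j - 4) + 1 := by omega
    rw [this, pow_succ]
    nlinarith

theorem central_of_small (U : Subgroup Q) [U.Normal] (hab : ∀ x ∈ U, ∀ y ∈ U, x * y = y * x)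
    (ρ : Q →* alternatingGroup β) (hρ : Function.Surjective ρ) (hker : ρ.ker = U)
    (hβ : 21 ≤ Fintype.card β) (hodd : Odd (Nat.card U))
    (hcard : 2 * Nat.card U < (Fintype.card β + 1) * Fintype.card β) : U ≤ Subgroup.center Q := by
  classical
  by_contra hcon
  obtain ⟨u0, hu0, hu0c⟩ := SetLike.not_le_iff_exists.1 hcon
  set j := Fintype.card β with hj
  -- commuting with a lift
  have lift : ∀ u ∈ U, ∀ g g' : Q, ρ g = ρ g' → g * u = u * g → g' * u = u * g' := by
    intro u hu g g' h h1
    have hm : g⁻¹ * g' ∈ U := by rw [← hker, MonoidHom.mem_ker]; simp [h]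
    have h2 := hab _ hm u hu
    calc g' * u = g * ((g⁻¹ * g') * u) := by group
      _ = (g * u) * (g⁻¹ * g') := by rw [h2]; group
      _ = _ := by rw [h1]; group
  let Lu : Q → Subgroup (alternatingGroup β) := fun u => (Subgroup.centralizer {u}).map ρ
  have hLu : ∀ u ∈ U, ∀ a b c, Cyc (Lu u) a b c →
      ∀ g : Q, (ρ g : Perm β) = swap a b * swap b c → g * u = u * g := by
    rintro u hu a b c ⟨_, ⟨g', hg', rfl⟩, h⟩ g hg
    refine lift u hu g' g (Subtype.ext (h.trans hg.symm)) ?_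
    have := Subgroup.mem_centralizer_iff.1 hg' u (by simp)
    exact this.symm
  have cen : ∀ u ∈ U, Lu u = ⊤ → u ∈ Subgroup.center Q := by
    intro u hu h
    rw [Subgroup.mem_center_iff]
    intro g
    have : ρ g ∈ Lu u := by rw [h]; trivial
    obtain ⟨g', hg', h'⟩ := this
    exact lift u hu g' g h' (Subgroup.mem_centralizer_iff.1 hg' u (by simp)).symm
  have hidx : (Lu u0).index ≤ Nat.card U := by
    have h1 : (Lu u0).index = (Subgroup.centralizer {u0}).index := by
      apply Subgroup.index_map_eq _ hρ
      rw [hker]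
      intro x hx
      rw [Subgroup.mem_centralizer_iff]
      intro y hy
      rw [Set.mem_singleton_iff.1 hy]
      exact hab _ hu0 _ hx
    rw [h1, Subgroup.index_eq_card]
    let F : Q ⧸ Subgroup.centralizer {u0} → U := Quotient.lift
      (fun g => ⟨g * u0 * g⁻¹, ‹U.Normal›.conj_mem _ hu0 g⟩) (by
        intro a b h
        have h := (QuotientGroup.leftRel_apply).1 h
        have h := Subgroup.mem_centralizer_iff.1 h u0 (by simp)
        apply Subtype.ext
        show a * u0 * a⁻¹ = b * u0 * b⁻¹
        calc a * u0 * a⁻¹ = a * (u0 * (a⁻¹ * b)) * b⁻¹ := by group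
          _ = _ := by rw [h]; group)
    apply Nat.card_le_card_of_injective F
    intro a b
    induction a using QuotientGroup.induction_on with | _ a
    induction b using QuotientGroup.induction_on with | _ b
    intro h
    have h : a * u0 * a⁻¹ = b * u0 * b⁻¹ := congrArg Subtype.val h
    rw [QuotientGroup.eq, Subgroup.mem_centralizer_iff]
    intro y hy
    rw [Set.mem_singleton_iff.1 hy]
    calc u0 * (a⁻¹ * b) = a⁻¹ * (a * u0 * a⁻¹) * b := by group
      _ = _ := by rw [h]; group
  have hidx2 : (Lu u0).index < j.choose 3 := by
    obtain ⟨m, hm⟩ : ∃ m, j = m + 2 := ⟨j - 2, by omega⟩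
    have h6 : 6 * j.choose 3 = (m+2)*(m+1)*m := by rw [hm]; exact six_choose_three m
    have : 3 * ((j+1) * j) ≤ (m+2)*(m+1)*m := by
      rw [hm]; 
      have : 3 * (m+2+1) ≤ (m+1)*m := by nlinarith
      nlinarith [Nat.mul_le_mul_left (m+2) this]
    omega
  rcases small_index (Lu u0) hβ hidx2 with htop | ⟨-, D, hDc, hD⟩
  · exact hu0c (cen u0 hu0 htop)
  obtain ⟨d, hd, d', hd', hdd⟩ := Finset.one_lt_card.1 (show 1 < D.card by omega)
  let X0 := (D.erase d).erase d'
  have hX0 : j ≤ X0.card + 4 := by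
    have h1 := Finset.card_erase_of_mem hd
    have h2 := Finset.card_erase_of_mem (Finset.mem_erase.2 ⟨hdd.symm, hd'⟩)
    show j ≤ ((D.erase d).erase d').card + 4
    omega
  have hX0m : ∀ x ∈ X0, x ≠ d ∧ x ≠ d' ∧ x ∈ D := by
    intro x hx
    simp only [X0, Finset.mem_erase] at hx
    exact ⟨hx.2.1, hx.1, hx.2.2⟩
  let F : Finset β → Subgroup Q := fun X =>
    U ⊓ Subgroup.centralizer {g : Q | ∃ x ∈ X, (ρ g : Perm β) = swap d d' * swap d' x}
  have memF : ∀ X u, u ∈ F X ↔ u ∈ U ∧ ∀ x ∈ X, ∀ g : Q, (ρ g : Perm β) = swap d d' * swap d' x → g * u = u * g := by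
    intro X u
    simp only [F, Subgroup.mem_inf, Subgroup.mem_centralizer_iff, Set.mem_ofPred_eq]
    exact and_congr_right fun _ => ⟨fun h x hx g hg => h g ⟨x, hx, hg⟩, fun h g ⟨x, hx, hg⟩ => h x hx g hg⟩
  have hF0 : u0 ∈ F X0 := by
    rw [memF]
    refine ⟨hu0, fun x hx => hLu u0 hu0 d d' x ?_⟩
    obtain ⟨h1, h2, h3⟩ := hX0m x hx
    exact hD d hd d' hd' x h3 hdd h2.symm h1.symm
  have anti : ∀ X Y, X ⊆ Y → F Y ≤ F X := by
    intro X Y h u hu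
    rw [memF] at hu ⊢
    exact ⟨hu.1, fun x hx => hu.2 x (h hx)⟩
  have strict : ∀ X, ∀ x ∈ X0, x ∉ X → insert x X ⊆ X0 → F (insert x X) < F X := by
    intro X x hx hxX hsub
    refine lt_of_le_of_ne (anti _ _ (Finset.subset_insert _ _)) fun heq => ?_
    obtain ⟨hxd, hxd', -⟩ := hX0m x hx
    have huX : u0 ∈ F X := anti X X0 ((Finset.subset_insert _ _).trans hsub) hF0
    apply hu0c
    apply cen u0 hu0
    apply top_of_cyc_base _ d d' hdd _ (by omega)
    intro x' hxpd hxpdp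
    suffices ∃ g : Q, (ρ g : Perm β) = swap d d' * swap d' x' ∧ g * u0 = u0 * g by
      obtain ⟨g, hg, hg'⟩ := this
      refine ⟨ρ g, ⟨g, ?_, rfl⟩, hg⟩
      refine Subgroup.mem_centralizer_iff.2 fun y hy => ?_
      rw [Set.mem_singleton_iff.1 hy]; exact hg'.symm
    have ev3 : ∀ y, y ≠ d' → ∃ g : Q, (ρ g : Perm β) = swap d d' * swap d' y := by
      intro y hy
      obtain ⟨g, hg⟩ := hρ ⟨swap d d' * swap d' y, by
        rw [mem_alternatingGroup, Perm.sign_mul, sign_swap hdd, sign_swap hy.symm]; rfl⟩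
      exact ⟨g, by rw [hg]⟩
    by_cases hx'X : x' ∈ insert x X
    · obtain ⟨g, hg⟩ := ev3 x' hxpdp
      rw [← heq] at huX
      exact ⟨g, hg, ((memF _ _).1 huX).2 x' hx'X g hg⟩
    have hxx' : x ≠ x' := by rintro rfl; exact hx'X (Finset.mem_insert_self _ _)
    obtain ⟨t, ht⟩ := hρ ⟨swap x x' * swap d d', by
        rw [mem_alternatingGroup, Perm.sign_mul, sign_swap hdd, sign_swap hxx']; rfl⟩
    have ht' : (ρ t : Perm β) = swap x x' * swap d d' := by rw [ht]
    have td : (ρ t : Perm β) d = d' := by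
      rw [ht']; simp [swap_apply_of_ne_of_ne hxd'.symm hxpdp.symm]
    have td' : (ρ t : Perm β) d' = d := by
      rw [ht']; simp [swap_apply_of_ne_of_ne hxd.symm hxpd.symm]
    have conjt : ∀ y y', y ≠ d → y' ≠ d → y' ≠ d' → (ρ t : Perm β) y = y' → ∀ g : Q, (ρ g : Perm β) = swap d d' * swap d' y →
        (ρ (t * g * t⁻¹)⁻¹ : Perm β) = swap d d' * swap d' y' := by
      intro y y' _ h1 h2 h3 g hg
      have e1 : (ρ (t * g * t⁻¹) : Perm β) = swap d' d * swap d y' := by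
        have s1 := Equiv.swap_apply_apply (ρ t : Perm β) d d'
        have s2 := Equiv.swap_apply_apply (ρ t : Perm β) d' y
        rw [td, td'] at s1
        rw [td', h3] at s2
        rw [s1, s2]
        simp only [map_mul, map_inv, Subgroup.coe_mul, Subgroup.coe_inv, hg]
        group
      rw [map_inv, Subgroup.coe_inv, e1, mul_inv_rev, swap_inv, swap_inv, swap_comm d y', swap_comm d' d]
      exact rot_eq h1 hdd h2
    have tx : (ρ t : Perm β) x = x' := by
      rw [ht', Perm.mul_apply, swap_apply_of_ne_of_ne hxd hxd', swap_apply_left]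
    have tinv : t⁻¹ * u0 * t ∈ F X := by
      rw [memF]
      refine ⟨by simpa using ‹U.Normal›.conj_mem _ hu0 t⁻¹, fun y hy g hg => ?_⟩
      obtain ⟨hyd, hyd', -⟩ := hX0m y (hsub (Finset.mem_insert_of_mem hy))
      have ty : (ρ t : Perm β) y = y := by
        rw [ht', Perm.mul_apply, swap_apply_of_ne_of_ne hyd hyd', swap_apply_of_ne_of_ne]
        · rintro rfl; exact hxX hy
        · rintro rfl; exact hx'X (Finset.mem_insert_of_mem hy)
      have h1 := ((memF _ _).1 huX).2 y hy _ (conjt y y hyd hyd hyd' ty g hg)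
      have h2 : (t * g * t⁻¹) * u0 = u0 * (t * g * t⁻¹) := by
        have : Commute (t * g * t⁻¹)⁻¹ u0 := h1
        exact Commute.inv_left_iff.1 this
      calc g * (t⁻¹ * u0 * t) = t⁻¹ * ((t * g * t⁻¹) * u0) * t := by group
        _ = _ := by rw [h2]; group
    rw [← heq, memF] at tinv
    obtain ⟨g, hg⟩ := ev3 x hxd'
    have h1 := tinv.2 x (Finset.mem_insert_self _ _) g hg
    refine ⟨_, conjt x x' hxd hxpd hxpdp tx g hg, ?_⟩
    have : Commute (t * g * t⁻¹) u0 := by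
      show (t * g * t⁻¹) * u0 = u0 * (t * g * t⁻¹)
      calc (t * g * t⁻¹) * u0 = t * (g * (t⁻¹ * u0 * t)) * t⁻¹ := by group
        _ = _ := by rw [h1]; group
    exact this.inv_left
  have ind : ∀ X : Finset β, X ⊆ X0 → 3 ^ X.card * Nat.card (F X) ≤ Nat.card U := by
    intro X
    induction X using Finset.induction_on with
    | empty =>
      intro _
      simp only [Finset.card_empty, pow_zero, one_mul]
      exact Nat.card_le_card_of_injective _ (Subgroup.inclusion_injective (inf_le_left))
    | insert x X hx ih =>
      intro hsub
      have h1 := ih ((Finset.subset_insert _ _).trans hsub)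
      have h2 := card_three_mul (strict X x (hsub (Finset.mem_insert_self _ _)) hx hsub)
        (Odd.of_dvd_nat hodd (Subgroup.card_dvd_of_le inf_le_left))
      rw [Finset.card_insert_of_notMem hx, pow_succ, mul_assoc]
      exact (Nat.mul_le_mul_left _ h2).trans h1
  have h1 := ind X0 (Finset.Subset.refl _)
  have h2 : 0 < Nat.card (F X0) := Nat.card_pos
  have h3 := three_pow_bound j hβ
  have h4 : 3 ^ (j-4) ≤ 3 ^ X0.card := Nat.pow_le_pow_right (by norm_num) (by omega)
  have : 3 ^ X0.card ≤ Nat.card U := le_trans (Nat.le_mul_of_pos_right _ h2) h1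
  omega
end triv


section carmichael
variable {G : Type*} [Group G] [Finite G] {ι : Type*}

lemma sq_inv_of_cube {y : G} (h : y ^ 3 = 1) : y ^ 2 = y⁻¹ := by
  rw [eq_inv_iff_mul_eq_one, ← pow_succ]; exact h

lemma carmichael (x : ι → G) (s : Finset ι) (h3 : ∀ i ∈ s, x i ^ 3 = 1)
    (h2 : ∀ i ∈ s, ∀ j ∈ s, i ≠ j → (x i * x j) ^ 2 = 1) :
    2 * Nat.card (Subgroup.closure (Set.image x s)) ≤ (s.card + 2).factorial := by
  classical
  induction s using Finset.induction_on with
  | empty => simp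
  | insert a s ha ih =>
    have ih := ih (fun i hi => h3 i (Finset.mem_insert_of_mem hi))
      (fun i hi j hj => h2 i (Finset.mem_insert_of_mem hi) j (Finset.mem_insert_of_mem hj))
    set Y := Subgroup.closure (Set.image x s) with hY
    set y := x a with hy
    have y3 : y ^ 3 = 1 := h3 a (Finset.mem_insert_self _ _)
    have x3 : ∀ i ∈ s, x i ^ 3 = 1 := fun i hi => h3 i (Finset.mem_insert_of_mem hi)
    have xY : ∀ i ∈ s, x i ∈ Y := fun i hi => Subgroup.subset_closure ⟨i, hi, rfl⟩
    have yi : ∀ i ∈ s, y * x i = (x i)⁻¹ * y⁻¹ := by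
      intro i hi
      have := h2 a (Finset.mem_insert_self _ _) i (Finset.mem_insert_of_mem hi) (by rintro rfl; exact ha hi)
      rw [← mul_inv_rev, eq_inv_iff_mul_eq_one, ← sq]; exact this
    have iy : ∀ i ∈ s, x i * y = y⁻¹ * (x i)⁻¹ := by
      intro i hi
      have := h2 i (Finset.mem_insert_of_mem hi) a (Finset.mem_insert_self _ _) (by rintro rfl; exact ha hi)
      rw [← mul_inv_rev, eq_inv_iff_mul_eq_one, ← sq]; exact this
    have yy := sq_inv_of_cube y3
    have yxi : ∀ i ∈ s, y * (x i)⁻¹ = (x i)⁻¹ * (y⁻¹ * x i) := by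
      intro i hi
      have e : (x i)⁻¹ = x i * x i := by rw [← sq, sq_inv_of_cube (x3 i hi)]
      calc y * (x i)⁻¹ = y * x i * x i := by rw [mul_assoc, ← e]
        _ = _ := by rw [yi i hi, mul_assoc]
    let T : Finset G := {1, y, y⁻¹} ∪ s.image (fun j => y⁻¹ * x j)
    have hT : T.card ≤ s.card + 3 := by
      refine (Finset.card_union_le _ _).trans ?_
      have := Finset.card_le_three (a := (1 : G)) (b := y) (c := y⁻¹)
      have := Finset.card_image_le (s := s) (f := fun j => y⁻¹ * x j)
      omega
    have T1 : (1 : G) ∈ T := by simp [T]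
    have Ty : y ∈ T := by simp [T]
    have Tyy : y⁻¹ ∈ T := by simp [T]
    have Tx : ∀ j ∈ s, y⁻¹ * x j ∈ T := fun j hj =>
      Finset.mem_union_right _ (Finset.mem_image_of_mem _ hj)
    let P : G → Prop := fun g => ∃ u ∈ Y, ∃ t ∈ T, g = u * t
    have Pmul : ∀ u ∈ Y, ∀ g, P g → P (u * g) := by
      rintro u hu _ ⟨v, hv, t, ht, rfl⟩
      exact ⟨u * v, mul_mem hu hv, t, ht, by group⟩
    have Pt : ∀ t ∈ T, P t := fun t ht => ⟨1, one_mem _, t, ht, by simp⟩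
    have gen : ∀ i ∈ insert a s, ∀ t ∈ T, P (t * x i) := by
      intro i hi t ht
      simp only [T, Finset.mem_union, Finset.mem_insert, Finset.mem_singleton, Finset.mem_image] at ht
      rcases Finset.mem_insert.1 hi with rfl | hi
      · rw [← hy]
        rcases ht with (rfl | rfl | rfl) | ⟨j, hj, rfl⟩
        · simpa using Pt _ Ty
        · rw [← sq, yy]; exact Pt _ Tyy
        · simpa using Pt _ T1
        · have : y⁻¹ * x j * y = (x j)⁻¹ * (y⁻¹ * x j) := by
            rw [← yxi j hj, mul_assoc, iy j hj, ← mul_assoc, ← sq, inv_pow, yy, inv_inv]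
          rw [this]
          exact Pmul _ (inv_mem (xY j hj)) _ (Pt _ (Tx j hj))
      · rcases ht with (rfl | rfl | rfl) | ⟨j, hj, rfl⟩
        · rw [one_mul]; simpa using Pmul _ (xY i hi) _ (Pt _ T1)
        · rw [yi i hi]; exact Pmul _ (inv_mem (xY i hi)) _ (Pt _ Tyy)
        · exact Pt _ (Tx i hi)
        · by_cases hij : j = i
          · subst hij
            have : y⁻¹ * x j * x j = x j * y := by
              rw [iy j hj, mul_assoc, ← sq, sq_inv_of_cube (x3 j hj)]
            rw [this]
            exact Pmul _ (xY j hj) _ (Pt _ Ty)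
          · have h := h2 j (Finset.mem_insert_of_mem hj) i (Finset.mem_insert_of_mem hi) hij
            have h' : x j * x i = (x i)⁻¹ * (x j)⁻¹ := by
              rw [← mul_inv_rev, eq_inv_iff_mul_eq_one, ← sq]; exact h
            have : y⁻¹ * x j * x i = x i * ((x j)⁻¹ * (y⁻¹ * x j)) := by
              rw [mul_assoc, h', ← mul_assoc, ← iy i hi, mul_assoc, yxi j hj]
            rw [this]
            exact Pmul _ (xY i hi) _ (Pmul _ (inv_mem (xY j hj)) _ (Pt _ (Tx j hj)))
    have Pgen : ∀ i ∈ insert a s, ∀ g, P g → P (g * x i) := by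
      rintro i hi _ ⟨u, hu, t, ht, rfl⟩
      rw [mul_assoc]
      exact Pmul _ hu _ (gen i hi t ht)
    have all : ∀ g ∈ Subgroup.closure (Set.image x (insert a s : Finset ι)), P g := by
      intro g hg
      induction hg using Subgroup.closure_induction_right with
      | one => exact Pt _ T1
      | mul_right g _ z hz ih =>
        obtain ⟨i, hi, rfl⟩ := hz
        exact Pgen i hi _ ih
      | mul_inv_cancel g _ z hz ih =>
        obtain ⟨i, hi, rfl⟩ := hz
        rw [← sq_inv_of_cube (h3 i hi), sq, ← mul_assoc]
        exact Pgen i hi _ (Pgen i hi _ ih)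
    have hcard : Nat.card (Subgroup.closure (Set.image x (insert a s : Finset ι))) ≤ Nat.card Y * T.card := by
      rw [← (show Nat.card T = T.card by simp), ← Nat.card_prod]
      choose! u hu t ht hut using all
      refine Nat.card_le_card_of_injective (fun g => ((⟨u g.1, hu g.1 g.2⟩, ⟨t g.1, ht g.1 g.2⟩) : Y × T)) ?_
      intro g g' h
      simp only [Prod.mk.injEq, Subtype.mk.injEq] at h
      apply Subtype.ext
      rw [hut _ g.2, hut _ g'.2, h.1, h.2]
    rw [Finset.card_insert_of_notMem ha, show s.card + 1 + 2 = (s.card + 2) + 1 by ring, Nat.factorial_succ]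
    calc _ ≤ 2 * (Nat.card Y * T.card) := by gcongr
      _ = T.card * (2 * Nat.card Y) := by ring
      _ ≤ (s.card + 3) * (s.card + 2).factorial := by gcongr
end carmichael


section mult
variable {β : Type*} [DecidableEq β] [Fintype β]

lemma conj_cyc_gen (τ : Perm β) (a b c : β) :
    τ * (swap a b * swap b c) * τ⁻¹ = swap (τ a) (τ b) * swap (τ b) (τ c) := by
  rw [Equiv.swap_apply_apply, Equiv.swap_apply_apply]; group

lemma cyc_inv_eq (p q a : β) (hpq : p ≠ q) (hp : a ≠ p) (hq : a ≠ q) :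
    swap q p * swap p a = (swap p q * swap q a)⁻¹ := by
  rw [mul_inv_rev, swap_inv, swap_inv, rot_eq hpq.symm hp.symm hq.symm, rot_eq hp.symm hq hpq, swap_comm a q, swap_comm q p]

lemma cyc_cube (a b c : β) (hab : a ≠ b) (hbc : b ≠ c) (hac : a ≠ c) :
    (swap a b * swap b c) ^ 3 = 1 := by
  calc (swap a b * swap b c) ^ 3 = (swap a b * swap b c) * ((swap a b * swap b c) * (swap a b * swap b c)) := by
        rw [pow_succ, pow_two, mul_assoc]
    _ = (swap a b * swap b c) * ((swap b c * swap c a) * (swap c a * swap a b)) := by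
        congr 2
        · exact rot_eq hab hbc hac
        · rw [rot_eq hab hbc hac, rot_eq hbc hac.symm hab.symm]
    _ = 1 := by
        simp [mul_assoc]

lemma swap_comm_disj (a b c d : β) (h1 : a ≠ c) (h2 : a ≠ d) (h3 : b ≠ c) (h4 : b ≠ d) :
    swap a b * swap c d = swap c d * swap a b := by
  have := Equiv.swap_apply_apply (swap a b) c d
  rw [swap_apply_of_ne_of_ne h1.symm h3.symm, swap_apply_of_ne_of_ne h2.symm h4.symm, swap_inv] at this
  nth_rewrite 2 [this]
  simp [mul_assoc]

lemma swap2_sq (a b c d : β) (h1 : a ≠ c) (h2 : a ≠ d) (h3 : b ≠ c) (h4 : b ≠ d) :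
    (swap a b * swap c d) ^ 2 = 1 := by
  rw [sq]
  nth_rewrite 1 [swap_comm_disj a b c d h1 h2 h3 h4]
  simp [mul_assoc]

lemma cyc_cyc (p q a b : β) (hpq : p ≠ q) (hap : a ≠ p) (haq : a ≠ q) (hbp : b ≠ p) (hbq : b ≠ q)
    (hab : a ≠ b) : ((swap p q * swap q a) * (swap p q * swap q b)) ^ 2 = 1 := by
  have : (swap p q * swap q a) * (swap p q * swap q b) = swap p a * swap q b := by
    have := Equiv.swap_apply_apply (swap p q) q a
    rw [swap_apply_right, swap_apply_of_ne_of_ne hap haq, swap_inv] at this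
    rw [this]; group
  rw [this]
  exact swap2_sq _ _ _ _ hpq hbp.symm haq hab

variable {E : Type*} [Group E] [Finite E]

lemma odd_sq_one {z : E} (Z : Subgroup E) (hodd : Odd (Nat.card Z)) (hz : z ∈ Z) (h : z ^ 2 = 1) : z = 1 := by
  have h1 : orderOf z ∣ 2 := orderOf_dvd_of_pow_eq_one h
  have h2 : orderOf z ∣ Nat.card Z := by
    have := orderOf_dvd_natCard (⟨z, hz⟩ : Z)
    rwa [← Subgroup.orderOf_coe] at this
  have h3 : orderOf z ∣ 1 := by
    have hc : Nat.Coprime 2 (Nat.card Z) := (Nat.coprime_two_left).2 hodd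
    rw [← hc.gcd_eq_one]
    exact Nat.dvd_gcd h1 h2
  rw [← orderOf_eq_one_iff]; exact Nat.dvd_one.1 h3

set_option maxHeartbeats 1000000 in
theorem multiplier (σ : E →* alternatingGroup β) (hσ : Function.Surjective σ)
    (hβ : 8 ≤ Fintype.card β) (hc : σ.ker ≤ Subgroup.center E) (hodd : Odd (Nat.card σ.ker)) :
    ∃ X : Subgroup E, X.Normal ∧ X ⊓ σ.ker = ⊥ ∧ X ⊔ σ.ker = ⊤ := by
  classical
  obtain ⟨e⟩ : Nonempty (Fin 8 ↪ β) := Function.Embedding.nonempty_of_card_le (by simpa using hβ)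
  have einj : ∀ i j, i ≠ j → e i ≠ e j := fun i j h => e.injective.ne h
  have cen : ∀ z ∈ σ.ker, ∀ g, z * g = g * z := fun z hz g =>
    ((Subgroup.mem_center_iff.1 (hc hz)) g).symm
  -- commutation lemma
  have comm : ∀ g h : E, σ g ^ 2 = 1 → σ g * σ h = σ h * σ g → g * h = h * g := by
    intro g h h1 h2
    set z := g * h * g⁻¹ * h⁻¹ with hz
    have zk : z ∈ σ.ker := by
      rw [MonoidHom.mem_ker, hz]; simp only [map_mul, map_inv]; rw [h2]; group
    have gk : g ^ 2 ∈ σ.ker := by rw [MonoidHom.mem_ker, map_pow, h1]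
    have e1 : g * h * g⁻¹ = z * h := by rw [hz]; group
    have e2 : g ^ 2 * h = z ^ 2 * h * g ^ 2 := by
      calc g ^ 2 * h = g * (g * h * g⁻¹) * g := by rw [sq]; group
        _ = (g * z) * h * g := by rw [e1]; group
        _ = z * (g * h * g⁻¹) * g ^ 2 := by rw [← cen z zk]; rw [sq]; group
        _ = _ := by rw [e1, sq z]; group
    rw [cen _ gk, eq_comm] at e2
    have e3 : z ^ 2 = 1 := by simpa [mul_assoc] using e2
    have := odd_sq_one _ hodd zk e3
    rw [this, one_mul] at e1
    exact mul_inv_eq_iff_eq_mul.1 e1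
  set p := e 0 with hp
  set q := e 1 with hq
  have hpq : p ≠ q := einj _ _ (by decide)
  let u : Fin 3 → β := ![e 2, e 4, e 6]
  let v : Fin 3 → β := ![e 3, e 5, e 7]
  have huv : ∀ i, u i ≠ v i ∧ u i ≠ p ∧ u i ≠ q ∧ v i ≠ p ∧ v i ≠ q := by
    intro i
    fin_cases i <;> simp [u, v, p, q]
  have huu : ∀ i j, i ≠ j → u i ≠ u j ∧ u i ≠ v j ∧ v i ≠ u j ∧ v i ≠ v j := by
    intro i j
    fin_cases i <;> fin_cases j <;> simp [u, v]
  have ht : ∀ i, ∃ t : E, (σ t : Perm β) = swap p q * swap (u i) (v i) := by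
    intro i
    obtain ⟨t, ht⟩ := hσ ⟨swap p q * swap (u i) (v i), by
      rw [mem_alternatingGroup, Perm.sign_mul, sign_swap hpq, sign_swap (huv i).1]; rfl⟩
    exact ⟨t, by rw [ht]⟩
  choose t ht using ht
  have tp : ∀ i, (σ (t i) : Perm β) p = q := by
    intro i
    rw [ht, Perm.mul_apply, swap_apply_of_ne_of_ne (huv i).2.1.symm (huv i).2.2.2.1.symm, swap_apply_left]
  have tq : ∀ i, (σ (t i) : Perm β) q = p := by
    intro i
    rw [ht, Perm.mul_apply, swap_apply_of_ne_of_ne (huv i).2.2.1.symm (huv i).2.2.2.2.symm, swap_apply_right]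
  have ta : ∀ i a, a ≠ p → a ≠ q → a ≠ u i → a ≠ v i → (σ (t i) : Perm β) a = a := by
    intro i a h1 h2 h3 h4
    rw [ht, Perm.mul_apply, swap_apply_of_ne_of_ne h3 h4, swap_apply_of_ne_of_ne h1 h2]
  have tinv : ∀ i a, a ≠ p → a ≠ q → a ≠ u i → a ≠ v i → ∀ y : E,
      (σ y : Perm β) = swap p q * swap q a → σ (t i) * σ y * (σ (t i))⁻¹ = (σ y)⁻¹ := by
    intro i a h1 h2 h3 h4 y hy
    apply Subtype.ext
    simp only [Subgroup.coe_mul, Subgroup.coe_inv, hy]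
    rw [conj_cyc_gen, tp, tq, ta i a h1 h2 h3 h4, cyc_inv_eq p q a hpq h1 h2]
  -- avoidance
  have avoid1 : ∀ a b : β, ∃ i, (a ≠ u i ∧ a ≠ v i) ∧ (b ≠ u i ∧ b ≠ v i) := by
    intro a b
    by_contra hcon
    push Not at hcon
    have key : ∀ i, a = u i ∨ a = v i ∨ b = u i ∨ b = v i := by
      intro i
      by_contra h
      push Not at h
      exact h.2.2.2 (hcon i ⟨h.1, h.2.1⟩ h.2.2.1)
    have h01 := huu 0 1 (by decide)
    have h02 := huu 0 2 (by decide)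
    have h12 := huu 1 2 (by decide)
    have k0 := key 0
    have k1 := key 1
    have k2 := key 2
    grind
  have hy : ∀ a, ∃ y : E, a ≠ p → a ≠ q → (σ y : Perm β) = swap p q * swap q a ∧
      ∀ i, a ≠ u i → a ≠ v i → t i * y * (t i)⁻¹ = y⁻¹ := by
    intro a
    by_cases hap : a = p
    · exact ⟨1, fun h => absurd hap h⟩
    by_cases haq : a = q
    · exact ⟨1, fun _ h => absurd haq h⟩
    obtain ⟨y0, hy0⟩ := hσ ⟨swap p q * swap q a, by
      rw [mem_alternatingGroup, Perm.sign_mul, sign_swap hpq, sign_swap (Ne.symm haq)]; rfl⟩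
    have hy0 : (σ y0 : Perm β) = swap p q * swap q a := by rw [hy0]
    obtain ⟨i, ⟨hi1, hi2⟩, -⟩ := avoid1 a a
    set z := t i * y0 * (t i)⁻¹ * y0 with hz
    have zk : z ∈ σ.ker := by
      rw [MonoidHom.mem_ker, hz]; simp only [map_mul, map_inv]
      rw [tinv i a hap haq hi1 hi2 y0 hy0]; group
    obtain ⟨r, hr⟩ := hodd
    set w := z ^ r with hw
    have wk : w ∈ σ.ker := pow_mem zk r
    have hw2 : w * w * z = 1 := by
      have : z ^ (Nat.card σ.ker) = 1 := by
        have := pow_card_eq_one' (x := (⟨z, zk⟩ : σ.ker))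
        exact congrArg Subtype.val this
      rw [hr] at this
      rw [hw, ← pow_add, ← pow_succ, ← two_mul]; exact this
    have hσy : (σ (y0 * w) : Perm β) = swap p q * swap q a := by
      rw [map_mul, (MonoidHom.mem_ker.1 wk), mul_one, hy0]
    have hyi : t i * (y0 * w) * (t i)⁻¹ = (y0 * w)⁻¹ := by
      rw [eq_inv_iff_mul_eq_one]
      calc t i * (y0 * w) * (t i)⁻¹ * (y0 * w) = t i * y0 * (w * ((t i)⁻¹ * y0)) * w := by group
        _ = z * w * w := by rw [cen w wk, hz]; group
        _ = w * w * z := by rw [cen z zk, mul_assoc, cen z zk]; group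
        _ = 1 := hw2
    refine ⟨y0 * w, fun _ _ => ⟨hσy, fun l hl1 hl2 => ?_⟩⟩
    by_cases hli : l = i
    · rw [hli]; exact hyi
    have hh := huu l i hli
    have e1 : (σ (t l * t i) : Perm β) = swap (u l) (v l) * swap (u i) (v i) := by
      rw [map_mul, Subgroup.coe_mul, ht, ht]
      have := swap_comm_disj p q (u l) (v l) (huv l).2.1.symm (huv l).2.2.2.1.symm (huv l).2.2.1.symm (huv l).2.2.2.2.symm
      rw [this]
      simp [mul_assoc]
    have fx : ∀ x, x ≠ u l → x ≠ v l → x ≠ u i → x ≠ v i → (σ (t l * t i) : Perm β) x = x := by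
      intro x k1 k2 k3 k4
      rw [e1, Perm.mul_apply, swap_apply_of_ne_of_ne k3 k4, swap_apply_of_ne_of_ne k1 k2]
    have c1 := comm (t l * t i) (y0 * w)
      (by apply Subtype.ext; rw [SubmonoidClass.coe_pow, e1]; exact swap2_sq _ _ _ _ hh.1 hh.2.1 hh.2.2.1 hh.2.2.2)
      (by
        apply Subtype.ext
        rw [Subgroup.coe_mul, Subgroup.coe_mul, hσy]
        rw [← mul_inv_eq_iff_eq_mul, conj_cyc_gen,
          fx p (huv l).2.1.symm (huv l).2.2.2.1.symm (huv i).2.1.symm (huv i).2.2.2.1.symm,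
          fx q (huv l).2.2.1.symm (huv l).2.2.2.2.symm (huv i).2.2.1.symm (huv i).2.2.2.2.symm,
          fx a hl1 hl2 hi1 hi2])
    have c2 : t l * (t i * (y0 * w) * (t i)⁻¹) * (t l)⁻¹ = y0 * w := by
      calc _ = (t l * t i) * (y0 * w) * (t l * t i)⁻¹ := by group
        _ = _ := by rw [c1]; group
    rw [hyi] at c2
    calc t l * (y0 * w) * (t l)⁻¹ = (t l * (y0 * w)⁻¹ * (t l)⁻¹)⁻¹ := by group
      _ = _ := by rw [c2]
  choose y hy using hy
  have invk : ∀ z ∈ σ.ker, z = z⁻¹ → z = 1 := by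
    intro z hz h
    apply odd_sq_one _ hodd hz
    rw [sq]; nth_rewrite 1 [h]; group
  have hy3 : ∀ a, a ≠ p → a ≠ q → y a ^ 3 = 1 := by
    intro a h1 h2
    obtain ⟨h3, h4⟩ := hy a h1 h2
    obtain ⟨i, ⟨hi1, hi2⟩, -⟩ := avoid1 a a
    have hk : y a ^ 3 ∈ σ.ker := by
      rw [MonoidHom.mem_ker, map_pow]
      apply Subtype.ext
      rw [SubmonoidClass.coe_pow, h3]
      exact cyc_cube p q a hpq h2.symm h1.symm
    apply invk _ hk
    calc y a ^ 3 = t i * y a ^ 3 * (t i)⁻¹ := by rw [← cen _ hk]; group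
      _ = (t i * y a * (t i)⁻¹) ^ 3 := by rw [conj_pow]
      _ = _ := by rw [h4 i hi1 hi2, inv_pow]
  have hy2 : ∀ a b, a ≠ p → a ≠ q → b ≠ p → b ≠ q → a ≠ b → (y a * y b) ^ 2 = 1 := by
    intro a b h1 h2 h1' h2' hab
    obtain ⟨h3, h4⟩ := hy a h1 h2
    obtain ⟨h3', h4'⟩ := hy b h1' h2'
    obtain ⟨i, ⟨hi1, hi2⟩, hi3, hi4⟩ := avoid1 a b
    have hk : (y a * y b) ^ 2 ∈ σ.ker := by
      rw [MonoidHom.mem_ker, map_pow, map_mul]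
      apply Subtype.ext
      rw [SubmonoidClass.coe_pow, Subgroup.coe_mul, h3, h3']
      exact cyc_cyc p q a b hpq h1 h2 h1' h2' hab
    apply invk _ hk
    calc (y a * y b) ^ 2 = t i * (y a * y b) ^ 2 * (t i)⁻¹ := by rw [← cen _ hk]; group
      _ = (t i * (y a * y b) * (t i)⁻¹) ^ 2 := by rw [conj_pow]
      _ = ((t i * y a * (t i)⁻¹) * (t i * y b * (t i)⁻¹)) ^ 2 := by congr 1; group
      _ = ((y a)⁻¹ * (y b)⁻¹) ^ 2 := by rw [h4 i hi1 hi2, h4' i hi3 hi4]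
      _ = ((y b * y a) ^ 2)⁻¹ := by rw [← inv_pow, mul_inv_rev]
      _ = ((y a)⁻¹ * (y a * y b) ^ 2 * y a)⁻¹ := by congr 1; rw [sq, sq]; group
      _ = _ := by rw [mul_assoc, cen _ hk]; group
  let s : Finset β := (Finset.univ.erase p).erase q
  have hs : ∀ a ∈ s, a ≠ p ∧ a ≠ q := by
    intro a ha; simp only [s, Finset.mem_erase] at ha; exact ⟨ha.2.1, ha.1⟩
  have hs' : ∀ a, a ≠ p → a ≠ q → a ∈ s := by
    intro a h1 h2; simp [s, h1, h2]
  have hsc : s.card + 2 = Fintype.card β := by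
    have h1 := Finset.card_erase_of_mem (Finset.mem_univ p)
    have h2 := Finset.card_erase_of_mem (Finset.mem_erase.2 ⟨hpq.symm, Finset.mem_univ q⟩)
    rw [Finset.card_univ] at h1
    show ((Finset.univ.erase p).erase q).card + 2 = _
    omega
  have hcar := carmichael y s (fun i hi => hy3 i (hs i hi).1 (hs i hi).2)
    (fun i hi j hj hij => hy2 i j (hs i hi).1 (hs i hi).2 (hs j hj).1 (hs j hj).2 hij)
  set X := Subgroup.closure (Set.image y s) with hX
  have hXtop : X.map σ = ⊤ := by
    apply top_of_cyc_base _ p q hpq _ (by omega)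
    intro a h1 h2
    exact ⟨σ (y a), ⟨y a, Subgroup.subset_closure ⟨a, hs' a h1 h2, rfl⟩, rfl⟩, (hy a h1 h2).1⟩
  have hsup : X ⊔ σ.ker = ⊤ := by
    rw [← Subgroup.comap_map_eq, hXtop, Subgroup.comap_top]
  refine ⟨X, ⟨?_⟩, ?_, hsup⟩
  · intro x hx g
    have hg : g ∈ X ⊔ σ.ker := by rw [hsup]; trivial
    obtain ⟨x', hx', z, hz, rfl⟩ := Subgroup.mem_sup_of_normal_right.1 hg
    have : x' * z * x * (x' * z)⁻¹ = x' * x * x'⁻¹ := by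
      calc _ = x' * (z * x) * z⁻¹ * x'⁻¹ := by group
        _ = _ := by rw [cen z hz]; group
    rw [this]
    exact mul_mem (mul_mem hx' hx) (inv_mem hx')
  · have : Nontrivial β := ⟨⟨p, q, hpq⟩⟩
    have hcA := two_mul_nat_card_alternatingGroup (α := β)
    rw [Nat.card_eq_fintype_card (α := Perm β), Fintype.card_perm, ← hsc] at hcA
    let f : X →* alternatingGroup β := σ.comp X.subtype
    have fs : Function.Surjective f := by
      intro g
      have : g ∈ X.map σ := by rw [hXtop]; trivial
      obtain ⟨x, hx, rfl⟩ := this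
      exact ⟨⟨x, hx⟩, rfl⟩
    have fb : Function.Bijective f := by
      rw [Nat.bijective_iff_surjective_and_card]
      refine ⟨fs, le_antisymm (by omega) (Nat.card_le_card_of_surjective f fs)⟩
    rw [eq_bot_iff]
    rintro x ⟨hx, hx'⟩
    have : f ⟨x, hx⟩ = f 1 := by rw [map_one]; exact hx'
    have := congrArg Subtype.val (fb.1 this)
    exact this
end mult


section homs
variable {G : Type*} [Group G] [Finite G]

lemma exists_hom_zmod (N Y : Subgroup G) [Y.Normal] (hYN : Y ⊔ N = ⊤) (hY : Y ≠ ⊤)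
    (hcom : ∀ a ∈ N, ∀ b ∈ N, a * b * a⁻¹ * b⁻¹ ∈ Y) :
    ∃ p : ℕ, p.Prime ∧ p ∣ Nat.card N ∧ ∃ ψ : G →* Multiplicative (ZMod p),
      (∀ y ∈ Y, ψ y = 1) ∧ ∃ n ∈ N, ψ n ≠ 1 := by
  have hN : ∀ g : G, ∃ n ∈ N, (QuotientGroup.mk g : G ⧸ Y) = QuotientGroup.mk n := by
    intro g
    have hg : g ∈ Y ⊔ N := by rw [hYN]; trivial
    obtain ⟨y, hy, n, hn, rfl⟩ := Subgroup.mem_sup_of_normal_left.1 hg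
    refine ⟨n, hn, ?_⟩
    rw [QuotientGroup.mk_mul, (QuotientGroup.eq_one_iff y).2 hy, one_mul]
  have hcomG : ∀ a b : G, a * b * a⁻¹ * b⁻¹ ∈ Y := by
    intro a b
    obtain ⟨n, hn, h1⟩ := hN a
    obtain ⟨m, hm, h2⟩ := hN b
    rw [← QuotientGroup.eq_one_iff]
    have := (QuotientGroup.eq_one_iff _).2 (hcom n hn m hm)
    simp only [QuotientGroup.mk_mul, QuotientGroup.mk_inv] at this ⊢
    rw [h1, h2, this]
  obtain ⟨K, hK, hYK⟩ := (eq_top_or_exists_le_coatom Y).resolve_left hY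
  have hKn : K.Normal := ⟨fun k hk g => by
    have : g * k * g⁻¹ = (g * k * g⁻¹ * k⁻¹) * k := by group
    rw [this]
    exact mul_mem (hYK (hcomG g k)) hk⟩
  let _ : CommGroup (G ⧸ K) := { (inferInstance : Group (G ⧸ K)) with
    mul_comm := by
      intro a b
      induction a using QuotientGroup.induction_on with | _ a
      induction b using QuotientGroup.induction_on with | _ b
      rw [← QuotientGroup.mk_mul, ← QuotientGroup.mk_mul, QuotientGroup.eq]
      have := hYK (hcomG b⁻¹ a⁻¹)
      convert this using 1; group }
  have hsimple : IsSimpleGroup (G ⧸ K) := by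
    have : Nontrivial (G ⧸ K) := by
      rw [QuotientGroup.nontrivial_iff]; exact hK.1
    refine ⟨fun J hJ => ?_⟩
    have hle : K ≤ J.comap (QuotientGroup.mk' K) := by
      intro x hx
      rw [Subgroup.mem_comap]
      have : QuotientGroup.mk' K x = 1 := (QuotientGroup.eq_one_iff x).2 hx
      rw [this]; exact one_mem _
    have hm : J = (J.comap (QuotientGroup.mk' K)).map (QuotientGroup.mk' K) :=
      (Subgroup.map_comap_eq_self_of_surjective (QuotientGroup.mk'_surjective K) J).symm
    rcases hle.eq_or_lt with h | h
    · left
      rw [hm, ← h]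
      exact QuotientGroup.map_mk'_self K
    · right
      rw [hm, hK.2 _ h, ← MonoidHom.range_eq_map]
      exact MonoidHom.range_eq_top.2 (QuotientGroup.mk'_surjective K)
  have hp := CommGroup.is_simple_iff_prime_card.1 hsimple
  set p := Nat.card (G ⧸ K) with hpdef
  have : Fact p.Prime := ⟨hp⟩
  have hcyc : IsCyclic (G ⧸ K) := isCyclic_of_prime_card rfl
  let e : Multiplicative (ZMod p) ≃* G ⧸ K := zmodCyclicMulEquiv hcyc
  have hNs : Function.Surjective ((QuotientGroup.mk' K).comp N.subtype) := by
    intro x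
    induction x using QuotientGroup.induction_on with | _ g
    obtain ⟨n, hn, h⟩ := hN g
    refine ⟨⟨n, hn⟩, ?_⟩
    have : (QuotientGroup.mk n : G ⧸ K) = QuotientGroup.mk g := by
      rw [QuotientGroup.eq] at h ⊢
      have := inv_mem (hYK h)
      simpa using this
    exact this
  refine ⟨p, hp, Subgroup.card_dvd_of_surjective _ hNs, e.symm.toMonoidHom.comp (QuotientGroup.mk' K), ?_, ?_⟩
  · intro y hy
    have : QuotientGroup.mk' K y = 1 := (QuotientGroup.eq_one_iff y).2 (hYK hy)
    rw [MonoidHom.comp_apply, this, map_one]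
  · obtain ⟨x, hx⟩ := exists_ne (1 : G ⧸ K)
    obtain ⟨n, hn⟩ := hNs x
    refine ⟨n, n.2, ?_⟩
    have : QuotientGroup.mk' K n = x := hn
    rw [MonoidHom.comp_apply, this]
    simpa using hx

variable {β : Type*} [DecidableEq β] [Fintype β]

/-- a conjugation invariant character of the kernel gives a character of the group -/
lemma extend_char (σ : G →* alternatingGroup β) (hσ : Function.Surjective σ)
    (hβ : 8 ≤ Fintype.card β) (hodd : Odd (Nat.card σ.ker)) {A : Type*} [Group A]
    (χ : σ.ker →* A) (hχ : ∃ n, χ n ≠ 1)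
    (hinv : ∀ (g : G) (n : σ.ker), χ ⟨g * n * g⁻¹, (inferInstance : σ.ker.Normal).conj_mem _ n.2 g⟩ = χ n) :
    ∃ p : ℕ, p.Prime ∧ p ∣ Nat.card σ.ker ∧ ∃ ψ : G →* Multiplicative (ZMod p),
       ∃ n ∈ σ.ker, ψ n ≠ 1 := by
  let K : Subgroup G := χ.ker.map σ.ker.subtype
  have memK : ∀ (n : G) (hn : n ∈ σ.ker), n ∈ K ↔ χ ⟨n, hn⟩ = 1 := by
    intro n hn
    constructor
    · rintro ⟨m, hm, rfl⟩; exact hm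
    · intro h; exact ⟨⟨n, hn⟩, h, rfl⟩
  have hKle : K ≤ σ.ker := by rintro _ ⟨m, hm, rfl⟩; exact m.2
  have hKn : K.Normal := ⟨fun k hk g => by
    have hk' := hKle hk
    rw [memK _ ((inferInstance : σ.ker.Normal).conj_mem _ hk' g)]
    rw [hinv g ⟨k, hk'⟩]
    exact (memK _ hk').1 hk⟩
  let σ' : G ⧸ K →* alternatingGroup β := QuotientGroup.lift K σ hKle
  have hσ' : Function.Surjective σ' := QuotientGroup.lift_surjective_of_surjective K σ hσ hKle
  have hker : σ'.ker = σ.ker.map (QuotientGroup.mk' K) := by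
    rw [QuotientGroup.ker_lift]
  have hcen : σ'.ker ≤ Subgroup.center (G ⧸ K) := by
    rw [hker]
    rintro _ ⟨n, hn, rfl⟩
    rw [Subgroup.mem_center_iff]
    intro g
    induction g using QuotientGroup.induction_on with | _ g
    show (QuotientGroup.mk g : G ⧸ K) * QuotientGroup.mk n = QuotientGroup.mk n * QuotientGroup.mk g
    rw [← QuotientGroup.mk_mul, ← QuotientGroup.mk_mul, eq_comm, QuotientGroup.eq]
    have h1 : (n * g)⁻¹ * (g * n) ∈ σ.ker := by
      rw [MonoidHom.mem_ker]; simp [MonoidHom.mem_ker.1 hn]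
    rw [memK _ h1]
    have h2 : (⟨_, h1⟩ : σ.ker) = ⟨g⁻¹ * (⟨n, hn⟩⁻¹ : σ.ker) * g⁻¹⁻¹, (inferInstance : σ.ker.Normal).conj_mem _ (⟨n, hn⟩⁻¹ : σ.ker).2 g⁻¹⟩ * ⟨n, hn⟩ := by
      apply Subtype.ext
      simp [mul_assoc]
    rw [h2, map_mul, hinv]
    simp
  obtain ⟨X, hXn, hX1, hX2⟩ := multiplier σ' hσ' hβ hcen
    (by rw [hker]; exact Odd.of_dvd_nat hodd (Subgroup.card_map_dvd _ _))
  let Y := X.comap (QuotientGroup.mk' K)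
  have hYn : Y.Normal := inferInstance
  have hYN : Y ⊔ σ.ker = ⊤ := by
    rw [eq_top_iff]
    intro g _
    have hg : QuotientGroup.mk' K g ∈ X ⊔ σ'.ker := by rw [hX2]; trivial
    obtain ⟨x, hx, z, hz, h⟩ := Subgroup.mem_sup_of_normal_left.1 hg
    rw [hker] at hz
    obtain ⟨n, hn, rfl⟩ := hz
    have : g * n⁻¹ ∈ Y := by
      show QuotientGroup.mk' K (g * n⁻¹) ∈ X
      rw [map_mul, map_inv, ← h]
      simpa using hx
    have e : g = (g * n⁻¹) * n := by group
    rw [e]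
    exact Subgroup.mul_mem_sup this hn
  have hYt : Y ≠ ⊤ := by
    intro h
    obtain ⟨n, hn⟩ := hχ
    apply hn
    rw [← memK n.1 n.2]
    have h1 : QuotientGroup.mk' K n.1 ∈ X ⊓ σ'.ker := by
      refine ⟨?_, ?_⟩
      · have : n.1 ∈ Y := by rw [h]; trivial
        exact this
      · rw [hker]; exact ⟨n.1, n.2, rfl⟩
    rw [hX1, Subgroup.mem_bot] at h1
    exact (QuotientGroup.eq_one_iff _).1 h1
  obtain ⟨p, hp, hpd, ψ, -, hψ⟩ := exists_hom_zmod σ.ker Y hYN hYt (by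
    intro a ha b hb
    show QuotientGroup.mk' K (a * b * a⁻¹ * b⁻¹) ∈ X
    have hac : QuotientGroup.mk' K a ∈ Subgroup.center (G ⧸ K) := hcen (by rw [hker]; exact ⟨a, ha, rfl⟩)
    have := Subgroup.mem_center_iff.1 hac (QuotientGroup.mk' K b)
    simp only [map_mul, map_inv]
    rw [← this]
    simp [mul_assoc])
  exact ⟨p, hp, hpd, ψ, hψ⟩
end homs


lemma nilp_sup_commutator {P : Type*} [Group P] [Finite P] [Group.IsNilpotent P] (J : Subgroup P)
    (h : J ⊔ commutator P = ⊤) : J = ⊤ := by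
  by_contra hJ
  obtain ⟨K, hK, hJK⟩ := (eq_top_or_exists_le_coatom J).resolve_left hJ
  have hKn : K.Normal := Subgroup.NormalizerCondition.normal_of_coatom K Group.normalizerCondition_of_isNilpotent hK
  have hsimple : IsSimpleGroup (P ⧸ K) := by
    have : Nontrivial (P ⧸ K) := by
      rw [QuotientGroup.nontrivial_iff]; exact hK.1
    refine ⟨fun J hJ => ?_⟩
    have hle : K ≤ J.comap (QuotientGroup.mk' K) := by
      intro x hx
      rw [Subgroup.mem_comap]
      have : QuotientGroup.mk' K x = 1 := (QuotientGroup.eq_one_iff x).2 hx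
      rw [this]; exact one_mem _
    have hm : J = (J.comap (QuotientGroup.mk' K)).map (QuotientGroup.mk' K) :=
      (Subgroup.map_comap_eq_self_of_surjective (QuotientGroup.mk'_surjective K) J).symm
    rcases hle.eq_or_lt with h | h
    · left
      rw [hm, ← h]
      exact QuotientGroup.map_mk'_self K
    · right
      rw [hm, hK.2 _ h, ← MonoidHom.range_eq_map]
      exact MonoidHom.range_eq_top.2 (QuotientGroup.mk'_surjective K)
  have hc := IsSimpleGroup.comm_iff_isSolvable.2 (inferInstance : Group.IsSolvable (P ⧸ K))
  have : commutator P ≤ K := by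
    rw [commutator_def, Subgroup.commutator_le]
    intro a _ b _
    rw [← QuotientGroup.eq_one_iff, commutatorElement_def]
    simp only [QuotientGroup.mk_mul, QuotientGroup.mk_inv]
    rw [hc (a : P ⧸ K) b]; group
  apply hK.1
  rw [eq_top_iff, ← h]
  exact sup_le hJK this

section P5
open scoped commutatorElement
variable {β : Type*} [DecidableEq β] [Fintype β] {G : Type*} [Group G] [Finite G]

lemma char_of_small (ρ : G →* alternatingGroup β) (hρ : Function.Surjective ρ) (hβ : 21 ≤ Fintype.card β)
    (hodd : Odd (Nat.card ρ.ker)) (hnil : Group.IsNilpotent ρ.ker) (S : Subgroup G)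
    (hS : S ⊔ ρ.ker = ⊤) (hS' : ¬ ρ.ker ≤ S)
    (hcard : 2 * S.relIndex ρ.ker < (Fintype.card β + 1) * Fintype.card β) :
    ∃ p : ℕ, p.Prime ∧ p ∣ Nat.card ρ.ker ∧ ∃ ψ : G →* Multiplicative (ZMod p),
       ∃ n ∈ ρ.ker, ψ n ≠ 1 := by
  set N := ρ.ker with hN
  let W : Subgroup G := (S ⊓ N) ⊔ ⁅N, N⁆
  have hNN : (⁅N, N⁆).Normal := inferInstance
  have hNNle : ⁅N, N⁆ ≤ N := Subgroup.commutator_le_left N N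
  have hWN : W ≤ N := sup_le inf_le_right hNNle
  have hWne : ¬ N ≤ W := by
    intro h
    apply hS'
    have h1 : S.subgroupOf N ⊔ commutator N = ⊤ := by
      apply Subgroup.map_injective N.subtype_injective
      rw [Subgroup.map_sup, Subgroup.subgroupOf_map_subtype, Subgroup.map_subtype_commutator,
        ← MonoidHom.range_eq_map, Subgroup.range_subtype]
      exact le_antisymm hWN h
    exact Subgroup.subgroupOf_eq_top.1 (nilp_sup_commutator _ h1)
  have decomp : ∀ g : G, ∃ s ∈ S, ∃ n ∈ N, g = s * n := by
    intro g
    have hg : g ∈ S ⊔ N := by rw [hS]; trivial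
    obtain ⟨s, hs, n, hn, h⟩ := Subgroup.mem_sup_of_normal_right.1 hg
    exact ⟨s, hs, n, hn, h.symm⟩
  have hWn : W.Normal := by
    constructor
    intro w hw g
    obtain ⟨s, hs, n, hn, rfl⟩ := decomp g
    have h1 : n * w * n⁻¹ ∈ W := by
      have : n * w * n⁻¹ = ⁅n, w⁆ * w := by rw [commutatorElement_def]; group
      rw [this]
      exact mul_mem (Subgroup.mem_sup_right (Subgroup.commutator_mem_commutator hn (hWN hw))) hw
    have h2 : ∀ w ∈ W, s * w * s⁻¹ ∈ W := by
      intro w hw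
      obtain ⟨a, ha, b, hb, rfl⟩ := Subgroup.mem_sup_of_normal_right.1 hw
      have : s * (a * b) * s⁻¹ = (s * a * s⁻¹) * (s * b * s⁻¹) := by group
      rw [this]
      refine mul_mem (Subgroup.mem_sup_left ⟨S.mul_mem (S.mul_mem hs ha.1) (S.inv_mem hs), ?_⟩)
        (Subgroup.mem_sup_right (hNN.conj_mem b hb s))
      exact (inferInstance : ρ.ker.Normal).conj_mem a ha.2 s
    have := h2 _ h1
    have e : s * n * w * (s * n)⁻¹ = s * (n * w * n⁻¹) * s⁻¹ := by group
    rw [e]; exact this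
  let q := QuotientGroup.mk' W
  let ρ' : G ⧸ W →* alternatingGroup β := QuotientGroup.lift W ρ hWN
  have hρ' : Function.Surjective ρ' := QuotientGroup.lift_surjective_of_surjective W ρ hρ hWN
  have hker : ρ'.ker = N.map q := by rw [QuotientGroup.ker_lift]
  have hUc : Nat.card (N.map q) = W.relIndex N := by
    rw [← Subgroup.relIndex_ker, QuotientGroup.ker_mk']
  have hUle : W.relIndex N ≤ S.relIndex N := by
    rw [← Subgroup.inf_relIndex_right S N]
    refine Nat.le_of_dvd ?_ (Subgroup.relIndex_dvd_of_le_left _ le_sup_left)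
    exact Nat.pos_of_dvd_of_pos (Subgroup.relIndex_dvd_card _ _) Nat.card_pos
  have hUn : (N.map q).Normal := by rw [← hker]; infer_instance
  have hcen : N.map q ≤ Subgroup.center (G ⧸ W) := by
    refine central_of_small (N.map q) ?_ ρ' hρ' hker hβ ?_ ?_
    · rintro _ ⟨a, ha, rfl⟩ _ ⟨b, hb, rfl⟩
      rw [← map_mul, ← map_mul]
      show (QuotientGroup.mk (a * b) : G ⧸ W) = QuotientGroup.mk (b * a)
      rw [QuotientGroup.eq]
      have : (a * b)⁻¹ * (b * a) = ⁅b⁻¹, a⁻¹⁆ := by rw [commutatorElement_def]; group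
      rw [this]
      exact Subgroup.mem_sup_right (Subgroup.commutator_mem_commutator (inv_mem hb) (inv_mem ha))
    · exact Odd.of_dvd_nat hodd (Subgroup.card_map_dvd _ _)
    · rw [hUc]; omega
  have hcomW : ∀ n ∈ N, ∀ g : G, n * g * n⁻¹ * g⁻¹ ∈ W := by
    intro n hn g
    have h1 := Subgroup.mem_center_iff.1 (hcen ⟨n, hn, rfl⟩) (q g)
    rw [← QuotientGroup.eq_one_iff]
    show q (n * g * n⁻¹ * g⁻¹) = 1
    simp only [map_mul, map_inv]
    rw [← h1]; group
  let Y : Subgroup G := S ⊔ W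
  have hWY : W ≤ Y := le_sup_right
  have hSY : S ≤ Y := le_sup_left
  have hYn : Y.Normal := by
    constructor
    intro y hy g
    obtain ⟨s, hs, n, hn, rfl⟩ := decomp g
    have h1 : n * y * n⁻¹ ∈ Y := by
      have : n * y * n⁻¹ = (n * y * n⁻¹ * y⁻¹) * y := by group
      rw [this]
      exact mul_mem (hWY (hcomW n hn y)) hy
    have e : s * n * y * (s * n)⁻¹ = s * (n * y * n⁻¹) * s⁻¹ := by group
    rw [e]
    exact mul_mem (mul_mem (hSY hs) h1) (inv_mem (hSY hs))
  obtain ⟨p, hp, hpd, ψ, -, h⟩ := exists_hom_zmod N Y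
    (by rw [eq_top_iff, ← hS]; exact sup_le (hSY.trans le_sup_left) le_sup_right)
    (by
      intro h
      apply hWne
      intro n hn
      have : n ∈ S ⊔ W := by
        have : n ∈ Y := by rw [h]; trivial
        exact this
      obtain ⟨s, hs, w, hw, h⟩ := Subgroup.mem_sup_of_normal_right.1 this
      have hsN : s ∈ N := by
        have : s = n * w⁻¹ := by rw [← h]; group
        rw [this]; exact mul_mem hn (inv_mem (hWN hw))
      rw [← h]
      exact mul_mem (Subgroup.mem_sup_left ⟨hs, hsN⟩) hw)
    (fun a ha b hb => hWY (hcomW a ha b))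
  exact ⟨p, hp, hpd, ψ, h⟩
end P5

section P6
variable {H : Type*} [Group H] {α : Type*} [Fintype α] [DecidableEq α]

/-- The elements of `H` whose image only moves points of `s`. -/
def Dfix (π : H →* alternatingGroup α) (s : Finset α) : Subgroup H :=
  (alternatingGroup.ofSubtype s).range.comap π

lemma mem_Dfix (π : H →* alternatingGroup α) (s : Finset α) (h : H) :
    h ∈ Dfix π s ↔ ∀ x, x ∉ s → (π h : Perm α) x = x := by
  unfold Dfix
  rw [Subgroup.mem_comap, alternatingGroup.mem_range_ofSubtype_iff]
  constructor
  · intro h1 x hx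
    by_contra hc
    exact hx (h1 (Perm.mem_support.2 hc))
  · intro h1 x hx
    by_contra hc
    exact (Perm.mem_support.1 hx) (h1 x hc)

lemma ker_le_Dfix (π : H →* alternatingGroup α) (s : Finset α) : π.ker ≤ Dfix π s := by
  intro h hh
  rw [mem_Dfix]
  intro x _
  rw [MonoidHom.mem_ker.1 hh]; rfl

lemma exists_restrict (π : H →* alternatingGroup α) (hπ : Function.Surjective π) (s : Finset α) :
    ∃ ρ : Dfix π s →* alternatingGroup s, Function.Surjective ρ ∧
      (∀ h, alternatingGroup.ofSubtype s (ρ h) = π h) ∧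
      ρ.ker = π.ker.subgroupOf (Dfix π s) := by
  let e := MonoidHom.ofInjective (alternatingGroup.ofSubtype_injective (s := s))
  let r : Dfix π s →* (alternatingGroup.ofSubtype s).range :=
    π.subgroupComap (alternatingGroup.ofSubtype s).range
  have hr : Function.Surjective r := MonoidHom.subgroupComap_surjective_of_surjective π _ hπ
  have key : ∀ h : Dfix π s, alternatingGroup.ofSubtype s (e.symm (r h)) = π h := by
    intro h
    have := congrArg Subtype.val (e.apply_symm_apply (r h))
    exact this
  refine ⟨e.symm.toMonoidHom.comp r, ?_, key, ?_⟩
  · exact e.symm.surjective.comp hr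
  · ext h
    rw [MonoidHom.mem_ker, Subgroup.mem_subgroupOf, MonoidHom.mem_ker, ← key h]
    constructor
    · intro hh
      have : e.symm (r h) = 1 := hh
      rw [this, map_one]
    · intro hh
      exact alternatingGroup.ofSubtype_injective (hh.trans (map_one _).symm)

lemma card_ker_restrict (π : H →* alternatingGroup α) (s : Finset α) :
    Nat.card (π.ker.subgroupOf (Dfix π s)) = Nat.card π.ker :=
  Nat.card_congr (Subgroup.subgroupOfEquivOfLe (ker_le_Dfix π s)).toEquiv

lemma stage5b {k : ℕ} (hk : 22 < k) [Finite H] (π : H →* alternatingGroup (Fin k))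
    (hπ : Function.Surjective π) (Fr : ∀ K : Subgroup H, K.map π = ⊤ → K = ⊤)
    (hnil : Group.IsNilpotent π.ker) (hne : π.ker ≠ ⊥) (hodd : Odd (Nat.card π.ker))
    (n : ℕ) (f : H →* Equiv.Perm (Fin n)) (hf : Function.Injective f)
    (hn : 2 * n < k * (k - 1) * (k - 2)) :
    ∃ o1 o2 : Fin k, o1 ≠ o2 ∧ ∃ p, p.Prime ∧ p ∣ Nat.card π.ker ∧
      ∃ φ : Dfix π ({o1, o2}ᶜ) →* Multiplicative (ZMod p), ∃ m : Dfix π ({o1, o2}ᶜ), (m : H) ∈ π.ker ∧ φ m ≠ 1 := by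
  obtain ⟨⟨m0, hm0⟩, hm1'⟩ := Subgroup.ne_bot_iff_exists_ne_one.1 hne
  have hm1 : m0 ≠ 1 := fun h => hm1' (Subtype.ext h)
  obtain ⟨ω, hω⟩ : ∃ ω, f m0 ω ≠ ω := by
    by_contra hc
    push Not at hc
    exact hm1 (hf ((Equiv.ext hc : f m0 = 1).trans (map_one f).symm))
  let _ : MulAction H (Fin n) := MulAction.compHom (Fin n) f
  let S : Subgroup H := MulAction.stabilizer H ω
  have hmS : m0 ∉ S := hω
  have hSn : S.index ≤ n := by
    rw [MulAction.index_stabilizer]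
    calc _ ≤ Nat.card (Fin n) := Set.ncard_le_card _
      _ = n := by simp
  set M := π.ker with hM
  set L := S.map π with hL
  have hLi : L.index = (S ⊔ M).index := by
    rw [hL, Subgroup.index_map, MonoidHom.range_eq_top.2 hπ, Subgroup.index_top, mul_one]
  have hidx : S.index = S.relIndex M * L.index := by
    have a1 := Subgroup.relIndex_mul_relIndex (S ⊓ M) S (S ⊔ M) inf_le_left le_sup_left
    have a2 := Subgroup.relIndex_mul_relIndex (S ⊓ M) M (S ⊔ M) inf_le_right le_sup_right
    rw [Subgroup.inf_relIndex_left] at a1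
    rw [Subgroup.inf_relIndex_right, Subgroup.relIndex_sup_right, ← a1, mul_comm] at a2
    have a3 : 0 < M.relIndex S := Nat.pos_of_dvd_of_pos (Subgroup.relIndex_dvd_card _ _) Nat.card_pos
    rw [hLi, ← Subgroup.relIndex_mul_index (le_sup_left : S ≤ S ⊔ M), Nat.eq_of_mul_eq_mul_left a3 a2]
  have hr1 : S.relIndex M ≠ 1 := by
    intro h; exact hmS (Subgroup.relIndex_eq_one.1 h hm0)
  have hr2 : Odd (S.relIndex M) := Odd.of_dvd_nat hodd (Subgroup.relIndex_dvd_card _ _)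
  have hr3 : 3 ≤ S.relIndex M := by
    obtain ⟨t, ht⟩ := hr2; omega
  have hLn : 3 * L.index ≤ n := by
    calc _ ≤ S.relIndex M * L.index := Nat.mul_le_mul_right _ hr3
      _ ≤ n := by rw [← hidx]; exact hSn
  obtain ⟨j, rfl⟩ : ∃ j, k = j + 2 := ⟨k - 2, by omega⟩
  have h6 := six_choose_three j
  have e1 : j + 2 - 1 = j + 1 := rfl
  have e2 : j + 2 - 2 = j := rfl
  rw [e1, e2] at hn
  have hLlt : L.index < (Fintype.card (Fin (j+2))).choose 3 := by
    rw [Fintype.card_fin]; omega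
  rcases small_index L (by simp; omega) hLlt with hT | ⟨hkL, D, hD, hcyc⟩
  · exfalso
    have := Fr S hT
    rw [this] at hmS; exact hmS trivial
  rw [Fintype.card_fin] at hkL hD
  have hbound : 2 * S.relIndex M < (j + 1) * j := by
    by_contra hc
    push Not at hc
    have : (j+2) * ((j+1)*j) ≤ 2 * n := by
      calc _ ≤ L.index * (2 * S.relIndex M) := Nat.mul_le_mul hkL hc
        _ = 2 * (S.relIndex M * L.index) := by ring
        _ ≤ 2 * n := by rw [← hidx]; omega
    nlinarith
  obtain ⟨T, hDT, hT2⟩ : ∃ T : Finset (Fin (j+2)), Dᶜ ⊆ T ∧ T.card = 2 := by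
    apply Finset.exists_superset_card_eq
    · rw [Finset.card_compl, Fintype.card_fin]; omega
    · simp
  obtain ⟨o1, o2, ho, rfl⟩ := Finset.card_eq_two.1 hT2
  refine ⟨o1, o2, ho, ?_⟩
  set s : Finset (Fin (j+2)) := {o1, o2}ᶜ with hs
  have hsD : s ⊆ D := by
    rw [hs]; intro x hx
    by_contra hc
    exact (Finset.mem_compl.1 hx) (hDT (Finset.mem_compl.2 hc))
  have hsc : Fintype.card s = j := by
    rw [Fintype.card_coe, hs, Finset.card_compl, hT2, Fintype.card_fin]; rfl
  have hA0 : ∀ x : alternatingGroup s, alternatingGroup.ofSubtype s x ∈ L := by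
    have : L.comap (alternatingGroup.ofSubtype s) = ⊤ := by
      apply top_of_cyc
      intro a b c hab hbc hac
      obtain ⟨g, hg, he⟩ := hcyc a (hsD a.2) b (hsD b.2) c (hsD c.2)
        (fun h => hab (Subtype.ext h)) (fun h => hbc (Subtype.ext h)) (fun h => hac (Subtype.ext h))
      have hmem : swap a b * swap b c ∈ alternatingGroup s := by
        rw [mem_alternatingGroup, Perm.sign_mul, sign_swap hab, sign_swap hbc]; simp
      refine ⟨⟨_, hmem⟩, ?_, rfl⟩
      show alternatingGroup.ofSubtype s ⟨_, hmem⟩ ∈ L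
      have hgg : alternatingGroup.ofSubtype s ⟨_, hmem⟩ = g := ?_
      · rw [hgg]; exact hg
      apply Subtype.ext
      rw [alternatingGroup.coe_ofSubtype]
      show Perm.ofSubtype (swap a b * swap b c) = (g : Perm _)
      rw [map_mul, Perm.ofSubtype_swap_eq, Perm.ofSubtype_swap_eq]
      exact he.symm
    intro x
    have h : x ∈ L.comap (alternatingGroup.ofSubtype s) := by rw [this]; trivial
    exact h
  obtain ⟨ρ, hρ, hρe, hρk⟩ := exists_restrict π hπ s
  have hMD : M ≤ Dfix π s := ker_le_Dfix π s
  have hDS : ∀ h ∈ Dfix π s, ∃ a ∈ S, ∃ m ∈ M, a * m = h := by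
    intro h hh
    obtain ⟨a, ha, he⟩ := hA0 (ρ ⟨h, hh⟩)
    rw [hρe] at he
    refine ⟨a, ha, a⁻¹ * h, ?_, by group⟩
    rw [hM, MonoidHom.mem_ker, map_mul, map_inv, he]; simp
  have hnil' : Group.IsNilpotent ρ.ker := by
    rw [hρk]
    exact Group.nilpotent_of_mulEquiv (Subgroup.subgroupOfEquivOfLe hMD).symm
  have hcardk : Nat.card ρ.ker = Nat.card M := by rw [hρk]; exact card_ker_restrict π s
  obtain ⟨p, hp, hpd, ψ, m, hm, hψ⟩ := char_of_small ρ hρ (by rw [hsc]; omega) (by rw [hcardk]; exact hodd) hnil'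
    (S.subgroupOf (Dfix π s)) (by
      rw [eq_top_iff]
      rintro ⟨h, hh⟩ -
      obtain ⟨a, ha, m, hm, e⟩ := hDS h hh
      have haD : a ∈ Dfix π s := by
        have : a = h * m⁻¹ := by rw [← e]; group
        rw [this]; exact mul_mem hh (inv_mem (hMD hm))
      have : (⟨h, hh⟩ : Dfix π s) = ⟨a, haD⟩ * ⟨m, hMD hm⟩ := Subtype.ext e.symm
      rw [this]
      refine mul_mem (Subgroup.mem_sup_left ?_) (Subgroup.mem_sup_right ?_)
      · exact ha
      · rw [hρk]; exact hm)
    (by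
      intro hc
      rw [hρk] at hc
      exact hmS (hc (show (⟨m0, hMD hm0⟩ : Dfix π s) ∈ M.subgroupOf (Dfix π s) from hm0)))
    (by rw [hρk, Subgroup.relIndex_subgroupOf hMD, hsc]; exact hbound)
  refine ⟨p, hp, hcardk ▸ hpd, ψ, m, ?_, hψ⟩
  rw [hρk] at hm
  exact hm
end P6

section P7
variable {H : Type*} [Group H] {X : Type*} {A : Type*} [AddCommGroup A]

/-- Crossed homomorphisms from `H` to the permutation module `X → A`. -/
def IsCr (θ : H →* Perm X) (c : H → X → A) : Prop :=
  ∀ g h x, c (g * h) x = c g x + c h ((θ g)⁻¹ x)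

variable {θ : H →* Perm X} {c : H → X → A}

lemma IsCr.one (hc : IsCr θ c) (x : X) : c 1 x = 0 := by
  have := hc 1 1 x
  simpa using this

lemma IsCr.inv (hc : IsCr θ c) (g : H) (x : X) : c g⁻¹ x = - c g (θ g x) := by
  have := hc g⁻¹ g x
  rw [inv_mul_cancel, hc.one, map_inv, inv_inv] at this
  exact eq_neg_of_add_eq_zero_left this.symm

lemma IsCr.conj (hc : IsCr θ c) {m : H} (hm : θ m = 1) (g : H) (x : X) :
    c (g * m * g⁻¹) x = c m ((θ g)⁻¹ x) := by
  rw [hc, hc, hc.inv, map_mul, hm]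
  simp

lemma IsCr.supp (hc : IsCr θ c) {Q : Type*} [Group Q] (π : H →* Q)
    (hker : ∀ m ∈ π.ker, θ m = 1) (Fr : ∀ K : Subgroup H, K.map π = ⊤ → K = ⊤)
    (hπ : Function.Surjective π)
    (hB : ∀ h, ∃ m ∈ π.ker, c m = c h) (h : H) : c h = 0 := by
  let K : Subgroup H :=
    { carrier := {h | c h = 0}
      one_mem' := funext fun x => hc.one x
      mul_mem' := by
        intro a b ha hb
        funext x
        have ha' : c a = 0 := ha
        have hb' : c b = 0 := hb
        rw [hc, ha', hb']; simp
      inv_mem' := by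
        intro a ha
        have ha' : c a = 0 := ha
        funext x
        rw [hc.inv, ha']; simp }
  have hK : K = ⊤ := by
    apply Fr
    rw [eq_top_iff]
    intro q _
    obtain ⟨h, rfl⟩ := hπ q
    obtain ⟨m, hm, e⟩ := hB h
    refine ⟨m⁻¹ * h, ?_, ?_⟩
    · funext x
      rw [hc, hc.inv, ← e, map_inv, hker m hm]
      simp
    · rw [map_mul, map_inv, MonoidHom.mem_ker.1 hm]; simp
  have : h ∈ K := by rw [hK]; trivial
  exact this

lemma IsCr.sub {p : ℕ} {c : H → X → ZMod p} (hc : IsCr θ c) {Q : Type*} [Group Q] (π : H →* Q)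
    (hker : ∀ m ∈ π.ker, θ m = 1) :
    ∃ B : Submodule (ZMod p) (X → ZMod p), (∀ v, v ∈ B ↔ ∃ m ∈ π.ker, c m = v) ∧
      ∀ g, ∀ v ∈ B, (fun x => v ((θ g)⁻¹ x)) ∈ B := by
  let B0 : AddSubgroup (X → ZMod p) :=
    { carrier := {v | ∃ m ∈ π.ker, c m = v}
      zero_mem' := ⟨1, one_mem _, funext fun x => hc.one x⟩
      add_mem' := by
        rintro _ _ ⟨a, ha, rfl⟩ ⟨b, hb, rfl⟩
        refine ⟨a * b, mul_mem ha hb, ?_⟩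
        funext x
        rw [hc, hker a ha]; simp
      neg_mem' := by
        rintro _ ⟨a, ha, rfl⟩
        refine ⟨a⁻¹, inv_mem ha, ?_⟩
        funext x
        rw [hc.inv, hker a ha]; simp }
  refine ⟨AddSubgroup.toZModSubmodule p B0, fun v => Iff.rfl, ?_⟩
  rintro g _ ⟨m, hm, rfl⟩
  refine ⟨g * m * g⁻¹, (MonoidHom.normal_ker π).conj_mem m hm g, ?_⟩
  funext x
  exact hc.conj (hker m hm) g x

open Classical in
lemma shapiro (θ : H →* Perm X) (x0 : X) (φ : H → A)
    (hφ : ∀ g h, θ g x0 = x0 → θ h x0 = x0 → φ (g * h) = φ g + φ h) :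
    ∃ c : H → X → A, IsCr θ c ∧ ∀ h, θ h x0 = x0 → c h x0 = φ h := by
  let t : X → H := fun x => if hx : ∃ g, θ g x0 = x then hx.choose else 1
  have ht : ∀ x, (∃ g, θ g x0 = x) → θ (t x) x0 = x := by
    intro x hx
    simp only [t, dif_pos hx]
    exact hx.choose_spec
  let c : H → X → A := fun h x => if ∃ g, θ g x0 = x then φ ((t x)⁻¹ * h * t ((θ h)⁻¹ x)) else 0
  have horb : ∀ h x, (∃ g, θ g x0 = x) ↔ (∃ g, θ g x0 = (θ h)⁻¹ x) := by
    intro h x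
    constructor
    · rintro ⟨g, rfl⟩
      exact ⟨h⁻¹ * g, by rw [map_mul, map_inv]; rfl⟩
    · rintro ⟨g, hg⟩
      exact ⟨h * g, by rw [map_mul, Perm.mul_apply, hg]; simp⟩
  have hstab : ∀ h x, (∃ g, θ g x0 = x) → θ ((t x)⁻¹ * h * t ((θ h)⁻¹ x)) x0 = x0 := by
    intro h x hx
    rw [map_mul, map_mul, map_inv, Perm.mul_apply, Perm.mul_apply, ht _ ((horb h x).1 hx),
      Perm.inv_eq_iff_eq, ht x hx]
    simp
  refine ⟨c, ?_, ?_⟩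
  · intro g h x
    by_cases hx : ∃ g, θ g x0 = x
    · have hx' := (horb g x).1 hx
      simp only [c, if_pos hx, if_pos hx']
      rw [← hφ _ _ (hstab g x hx) (hstab h _ hx')]
      congr 1
      rw [map_mul, mul_inv_rev, Perm.mul_apply]
      group
    · have hx' := mt (horb g x).2 hx
      simp only [c, if_neg hx, if_neg hx', add_zero]
  · intro h hh
    have hx : ∃ g, θ g x0 = x0 := ⟨1, by simp⟩
    have e : (θ h)⁻¹ x0 = x0 := by rw [Perm.inv_eq_iff_eq]; exact hh.symm
    simp only [c, if_pos hx, e]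
    have h1 := ht x0 hx
    have h2 : θ (t x0)⁻¹ x0 = x0 := by rw [map_inv, Perm.inv_eq_iff_eq]; exact h1.symm
    have h3 : θ ((t x0)⁻¹ * h) x0 = x0 := by rw [map_mul, Perm.mul_apply, hh, h2]
    have h4 : φ 1 = 0 := by
      have := hφ 1 1 (by simp) (by simp)
      simpa using this
    have h5 := hφ (t x0)⁻¹ (t x0) h2 h1
    rw [inv_mul_cancel, h4] at h5
    rw [hφ _ _ h3 h1, hφ _ _ h2 hh, add_comm (φ _) (φ h), add_assoc, ← h5, add_zero]

lemma exists_extra {α : Type*} [Fintype α] [DecidableEq α] (s : Finset α) (n : ℕ)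
    (h : s.card + n ≤ Fintype.card α) : ∃ e : Fin n → α, Function.Injective e ∧ ∀ i, e i ∉ s := by
  have hc : n ≤ sᶜ.card := by rw [Finset.card_compl]; omega
  obtain ⟨t, ht, hn⟩ := Finset.exists_subset_card_eq hc
  let e := (Finset.equivFinOfCardEq hn).symm
  refine ⟨fun i => (e i : α), Subtype.val_injective.comp e.injective, fun i => ?_⟩
  exact Finset.mem_compl.1 (ht (e i).2)

lemma alt_trans {α : Type*} [Fintype α] [DecidableEq α] (n : ℕ) (h : n + 2 ≤ Fintype.card α)
    (x y : Fin n → α) (hx : Function.Injective x) (hy : Function.Injective y) :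
    ∃ g : alternatingGroup α, ∀ i, (g : Perm α) (x i) = y i := by
  have h0 := alternatingGroup.isMultiplyPretransitive α
  have h1 : MulAction.IsMultiplyPretransitive (alternatingGroup α) α n :=
    MulAction.isMultiplyPretransitive_of_le (n := Nat.card α - 2)
      (by rw [Nat.card_eq_fintype_card]; omega) (Nat.sub_le _ _)
  obtain ⟨g, hg⟩ := h1.exists_smul_eq ⟨x, hx⟩ ⟨y, hy⟩
  exact ⟨g, fun i => by
    have := congrArg (fun e : Fin n ↪ α => e i) hg
    exact this⟩

end P7

section P8
variable {H : Type*} [Group H] {α : Type*} [Fintype α] [DecidableEq α]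

lemma perf_hom {A : Type*} [AddCommGroup A] (hp : commutator H = ⊤) (φ : H → A)
    (h : ∀ a b, φ (a * b) = φ a + φ b) (g : H) : φ g = 0 := by
  let Φ : H →* Multiplicative A :=
    MonoidHom.mk' (fun g => Multiplicative.ofAdd (φ g)) (fun a b => by rw [h]; rfl)
  have h1 : commutator H ≤ Φ.ker := Abelianization.commutator_subset_ker Φ
  have h2 : g ∈ Φ.ker := h1 (by rw [hp]; trivial)
  exact MonoidHom.mem_ker.1 h2

/-- The permutation action on points. -/
abbrev pt (π : H →* alternatingGroup α) : H →* Perm α := (alternatingGroup α).subtype.comp π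

lemma pt_ker (π : H →* alternatingGroup α) (m : H) (hm : m ∈ π.ker) : pt π m = 1 := by
  show ((π m : alternatingGroup α) : Perm α) = 1
  rw [MonoidHom.mem_ker.1 hm]; rfl

lemma exists_pt (π : H →* alternatingGroup α) (hπ : Function.Surjective π) (σ : Perm α)
    (hσ : sign σ = 1) : ∃ g, pt π g = σ := by
  obtain ⟨g, hg⟩ := hπ ⟨σ, mem_alternatingGroup.2 hσ⟩
  exact ⟨g, by show ((π g : alternatingGroup α) : Perm α) = σ; rw [hg]⟩

lemma span_diff {p : ℕ} (B : Submodule (ZMod p) (α → ZMod p))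
    (h : ∀ a b : α, a ≠ b → (Pi.single a 1 - Pi.single b 1 : α → ZMod p) ∈ B)
    (o : α) (v : α → ZMod p) (hv : ∑ i, v i = 0) : v ∈ B := by
  have e : v = ∑ i, v i • (Pi.single i 1 - Pi.single o 1 : α → ZMod p) := by
    simp only [smul_sub, Finset.sum_sub_distrib, ← Finset.sum_smul, hv, zero_smul, sub_zero]
    funext x
    simp [Finset.sum_apply, Pi.single_apply]
  rw [e]
  refine Submodule.sum_mem _ fun i _ => Submodule.smul_mem _ _ ?_
  by_cases hi : i = o
  · rw [hi, sub_self]; exact zero_mem _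
  · exact h i o hi

lemma diff_mem {p : ℕ} [Fact p.Prime] (h2 : (2 : ZMod p) ≠ 0) (hα : 8 ≤ Fintype.card α)
    (B : Submodule (ZMod p) (α → ZMod p))
    (hB : ∀ σ : Perm α, sign σ = 1 → ∀ v ∈ B, (fun x => v (σ x)) ∈ B)
    (f : α → ZMod p) (hf : f ∈ B) (a b : α) (hab : a ≠ b) (hne : f a ≠ f b) :
    (Pi.single a 1 - Pi.single b 1 : α → ZMod p) ∈ B := by
  obtain ⟨e, he, hes⟩ := exists_extra {a, b} 4 (by rw [Finset.card_pair hab]; omega)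
  obtain ⟨u, hu⟩ : ∃ u, u = e 0 := ⟨_, rfl⟩
  obtain ⟨v, hv⟩ : ∃ u, u = e 1 := ⟨_, rfl⟩
  obtain ⟨r, hr⟩ : ∃ u, u = e 2 := ⟨_, rfl⟩
  obtain ⟨s, hs⟩ : ∃ u, u = e 3 := ⟨_, rfl⟩
  have hea : ∀ i, e i ≠ a := fun i h => hes i (by simp [h])
  have heb : ∀ i, e i ≠ b := fun i h => hes i (by simp [h])
  have n1 : u ≠ v := by rw [hu, hv]; exact he.ne (by decide)
  have n2 : u ≠ r := by rw [hu, hr]; exact he.ne (by decide)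
  have n3 : u ≠ s := by rw [hu, hs]; exact he.ne (by decide)
  have n4 : v ≠ r := by rw [hv, hr]; exact he.ne (by decide)
  have n5 : v ≠ s := by rw [hv, hs]; exact he.ne (by decide)
  have n6 : r ≠ s := by rw [hr, hs]; exact he.ne (by decide)
  have m1 : u ≠ a := hu ▸ hea _
  have m2 : v ≠ a := hv ▸ hea _
  have m3 : r ≠ a := hr ▸ hea _
  have m4 : s ≠ a := hs ▸ hea _
  have m5 : u ≠ b := hu ▸ heb _
  have m6 : v ≠ b := hv ▸ heb _
  have m7 : r ≠ b := hr ▸ heb _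
  have m8 : s ≠ b := hs ▸ heb _
  clear hu hv hr hs hea heb hes he
  have s1 : sign (swap a b * swap u v) = 1 := by
    rw [Perm.sign_mul, sign_swap hab, sign_swap n1]; simp
  have s2 : sign (swap a b * swap r s) = 1 := by
    rw [Perm.sign_mul, sign_swap hab, sign_swap n6]; simp
  have hg := sub_mem hf (hB _ s1 f hf)
  have hw := sub_mem hg (hB _ s2 _ hg)
  have hz : (2 * (f a - f b)) ≠ 0 := mul_ne_zero h2 (sub_ne_zero.2 hne)
  have hm := Submodule.smul_mem B (2 * (f a - f b))⁻¹ hw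
  convert hm using 1
  rw [eq_inv_smul_iff₀ hz]
  clear hm hw hg s1 s2 hz
  funext x
  simp only [Pi.smul_apply, Pi.sub_apply, smul_eq_mul, Perm.mul_apply, Pi.single_apply]
  by_cases h1 : x = a
  · subst h1
    simp [hab, swap_apply_of_ne_of_ne, m1.symm, m2.symm, m3.symm, m4.symm, m5.symm, m6.symm, m7.symm, m8.symm]
    ring
  by_cases h3 : x = b
  · subst h3
    simp [hab, hab.symm, swap_apply_of_ne_of_ne, m1.symm, m2.symm, m3.symm, m4.symm, m5.symm, m6.symm, m7.symm, m8.symm]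
    ring
  by_cases h4 : x = u
  · subst h4
    simp [*, swap_apply_of_ne_of_ne, n1.symm, n2.symm, n3.symm, n4.symm, n5.symm, n6.symm]
  by_cases h5 : x = v
  · subst h5
    simp [*, swap_apply_of_ne_of_ne, n1.symm, n2.symm, n3.symm, n4.symm, n5.symm, n6.symm]
  by_cases h6 : x = r
  · subst h6
    simp [*, swap_apply_of_ne_of_ne, n1.symm, n2.symm, n3.symm, n4.symm, n5.symm, n6.symm]
  by_cases h7 : x = s
  · subst h7
    simp [*, swap_apply_of_ne_of_ne, n1.symm, n2.symm, n3.symm, n4.symm, n5.symm, n6.symm]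
  simp [*, swap_apply_of_ne_of_ne]

lemma L1 (π : H →* alternatingGroup α) (hπ : Function.Surjective π)
    (Fr : ∀ K : Subgroup H, K.map π = ⊤ → K = ⊤) (hp : commutator H = ⊤)
    (hα : 8 ≤ Fintype.card α) {p : ℕ} [Fact p.Prime] (h2 : (2 : ZMod p) ≠ 0)
    (hk : (Fintype.card α : ZMod p) ≠ 0) (c : H → α → ZMod p) (hc : IsCr (pt π) c) :
    ∀ m ∈ π.ker, c m = 0 := by
  obtain ⟨B, hB1, hB2⟩ := hc.sub π (pt_ker π)
  have hsum : ∀ h, ∑ i, c h i = 0 := by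
    refine perf_hom hp (fun h => ∑ i, c h i) ?_
    intro a b
    simp only [hc a b, Finset.sum_add_distrib]
    congr 1
    exact Equiv.sum_comp ((pt π a)⁻¹) (c b)
  have hB : ∀ σ : Perm α, sign σ = 1 → ∀ v ∈ B, (fun x => v (σ x)) ∈ B := by
    intro σ hσ v hv
    obtain ⟨g, hg⟩ := exists_pt π hπ σ⁻¹ (by rw [Perm.sign_inv, hσ])
    have := hB2 g v hv
    rw [hg, inv_inv] at this
    exact this
  by_cases hcon : ∀ m ∈ π.ker, ∀ x y, c m x = c m y
  · intro m hm
    funext x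
    have h1 := hsum m
    rw [Finset.sum_congr rfl (fun i _ => hcon m hm i x), Finset.sum_const, Finset.card_univ,
      nsmul_eq_mul] at h1
    exact (mul_eq_zero.1 h1).resolve_left hk
  · push Not at hcon
    obtain ⟨m, hm, a, b, hne⟩ := hcon
    have hab : a ≠ b := fun h => hne (by rw [h])
    have hd := diff_mem h2 hα B hB (c m) ((hB1 _).2 ⟨m, hm, rfl⟩) a b hab hne
    have hall : ∀ x y : α, x ≠ y → (Pi.single x 1 - Pi.single y 1 : α → ZMod p) ∈ B := by
      intro x y hxy
      obtain ⟨g, hg⟩ := alt_trans 2 (by omega) ![x, y] ![a, b]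
        (by intro i j; fin_cases i <;> fin_cases j <;> simp [hxy, hxy.symm])
        (by intro i j; fin_cases i <;> fin_cases j <;> simp [hab, hab.symm])
      have g0 : (g : Perm α) x = a := hg 0
      have g1 : (g : Perm α) y = b := hg 1
      have := hB (g : Perm α) (mem_alternatingGroup.1 g.2) _ hd
      convert this using 1
      funext z
      simp only [Pi.sub_apply, Pi.single_apply, ← g0, ← g1, EmbeddingLike.apply_eq_iff_eq]
    have h0 := hc.supp π (pt_ker π) Fr hπ (fun h => (hB1 _).1 (span_diff B hall a (c h) (hsum h)))
    intro m _
    exact h0 m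
end P8

section P9
variable {α : Type*} [Fintype α] [DecidableEq α] {R : Type*} [Field R]

lemma quad_minus (h2 : (2 : R) ≠ 0) (hα : 8 ≤ Fintype.card α) (F : α → α → R)
    (hs : ∀ i j, F j i = - F i j)
    (hq : ∀ a b c d, a ≠ b → a ≠ c → a ≠ d → b ≠ c → b ≠ d → c ≠ d →
      F a c - F b c - F a d + F b d = 0) : ∃ G : α → R, ∀ i j, i ≠ j → F i j = G i - G j := by
  have ho : Nonempty α := Fintype.card_pos_iff.1 (by omega)
  obtain ⟨o⟩ := ho
  have key : ∀ i j d, i ≠ j → i ≠ d → j ≠ d → F i j = F i d - F j d := by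
    intro i j d hij hid hjd
    obtain ⟨e, -, he⟩ := exists_extra {i, j, d} 1 (by
      have := Finset.card_le_three (a := i) (b := j) (c := d); omega)
    have hei : e 0 ≠ i := fun h => he 0 (by simp [h])
    have hej : e 0 ≠ j := fun h => he 0 (by simp [h])
    have hed : e 0 ≠ d := fun h => he 0 (by simp [h])
    generalize e 0 = e at *
    have q1 := hq i j d e hij hid hei.symm hjd hej.symm hed.symm
    have q2 := hq j d i e hjd hij.symm hej.symm hid.symm hed.symm hei.symm
    have q3 := hq d i j e hid.symm hjd.symm hed.symm hij hei.symm hej.symm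
    have a1 := hs i j
    have a2 := hs i d
    have a3 := hs j d
    have : 2 * (F i j - (F i d - F j d)) = 0 := by
      linear_combination -q1 - q2 - q3 + a1 - a2 + a3
    exact sub_eq_zero.1 ((mul_eq_zero.1 this).resolve_left h2)
  refine ⟨fun i => if i = o then 0 else F i o, ?_⟩
  intro i j hij
  by_cases hi : i = o
  · subst hi
    simp only [if_true, if_neg hij.symm]
    rw [hs j i]; ring
  by_cases hj : j = o
  · subst hj
    simp [hij]
  simp only [if_neg hi, if_neg hj]
  exact key i j o hij hi hj

lemma quad_plus (h2 : (2 : R) ≠ 0) (hα : 8 ≤ Fintype.card α) (F : α → α → R)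
    (hs : ∀ i j, F j i = F i j)
    (hq : ∀ a b c d, a ≠ b → a ≠ c → a ≠ d → b ≠ c → b ≠ d → c ≠ d →
      F a c - F b c - F a d + F b d = 0) : ∃ G : α → R,
      (∀ i a b, i ≠ a → i ≠ b → a ≠ b → 2 * G i = F i a + F i b - F a b) ∧
      ∀ i j, i ≠ j → F i j = G i + G j := by
  have step : ∀ i a b c, i ≠ a → i ≠ b → a ≠ b → i ≠ c → a ≠ c →
      F i a + F i b - F a b = F i a + F i c - F a c := by
    intro i a b c hia hib hab hic hac
    by_cases hbc : b = c
    · rw [hbc]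
    · linear_combination hq i a b c hia hib hic hab hac hbc
  have indep : ∀ i a b c d, i ≠ a → i ≠ b → a ≠ b → i ≠ c → i ≠ d → c ≠ d →
      F i a + F i b - F a b = F i c + F i d - F c d := by
    intro i a b c d hia hib hab hic hid hcd
    obtain ⟨e, -, he⟩ := exists_extra ({i, a} ∪ {c} : Finset α) 1 (by
      have := Finset.card_union_le {i, a} {c}
      have h1 := Finset.card_le_two (a := i) (b := a)
      rw [Finset.card_singleton] at this
      omega)
    have hei : e 0 ≠ i := fun h => he 0 (by simp [h])
    have hea : e 0 ≠ a := fun h => he 0 (by simp [h])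
    have hec : e 0 ≠ c := fun h => he 0 (by simp [h])
    generalize e 0 = e at *
    have s1 := step i a b e hia hib hab hei.symm hea.symm
    have s2 := step i e a c hei.symm hia hea hic hec
    have s3 := step i c e d hic hei.symm hec.symm hid hcd
    have t1 := hs a e
    have t2 := hs c e
    linear_combination s1 + s2 + s3 + t1 - t2
  have hex : ∀ i, ∃ g : R, ∀ a b, i ≠ a → i ≠ b → a ≠ b → 2 * g = F i a + F i b - F a b := by
    intro i
    obtain ⟨e, hei, he⟩ := exists_extra {i} 2 (by rw [Finset.card_singleton]; omega)
    have h0 : e 0 ≠ i := fun h => he 0 (by simp [h])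
    have h1 : e 1 ≠ i := fun h => he 1 (by simp [h])
    have h01 : e 0 ≠ e 1 := hei.ne (by decide)
    refine ⟨(F i (e 0) + F i (e 1) - F (e 0) (e 1)) / 2, ?_⟩
    intro a b hia hib hab
    rw [mul_div_cancel₀ _ h2]
    exact indep i _ _ a b h0.symm h1.symm h01 hia hib hab
  choose G hG using hex
  refine ⟨G, hG, ?_⟩
  intro i j hij
  obtain ⟨e, -, he⟩ := exists_extra {i, j} 1 (by
      have h1 := Finset.card_le_two (a := i) (b := j)
      omega)
  have hei : e 0 ≠ i := fun h => he 0 (by simp [h])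
  have hej : e 0 ≠ j := fun h => he 0 (by simp [h])
  have g1 := hG i j (e 0) hij hei.symm hej.symm
  have g2 := hG j i (e 0) hij.symm hej.symm hei.symm
  have := hs i j
  have : 2 * (F i j - (G i + G j)) = 0 := by linear_combination -g1 - g2 - this
  exact sub_eq_zero.1 ((mul_eq_zero.1 this).resolve_left h2)

lemma quad_eps (h2 : (2 : R) ≠ 0) (hα : 8 ≤ Fintype.card α) (ε : R) (hε : ε = 1 ∨ ε = -1)
    (F : α → α → R) (hs : ∀ i j, F j i = ε * F i j)
    (hq : ∀ a b c d, a ≠ b → a ≠ c → a ≠ d → b ≠ c → b ≠ d → c ≠ d →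
      F a c - F b c - F a d + F b d = 0) : ∃ G : α → R, ∀ i j, i ≠ j → F i j = G i + ε * G j := by
  rcases hε with rfl | rfl
  · obtain ⟨G, -, h⟩ := quad_plus h2 hα F (by simpa using hs) hq
    exact ⟨G, by simpa using h⟩
  · obtain ⟨G, h⟩ := quad_minus h2 hα F (by simpa using hs) hq
    exact ⟨G, fun i j hij => by rw [h i j hij]; ring⟩
end P9

section P10
variable {α : Type*} {R : Type*} [CommRing R]

/-- Apply `1 - s` to a function on pairs. -/
def dop (s : α → α) (f : α → α → R) : α → α → R := fun i j => f i j - f (s i) (s j)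

lemma quad_table (f : α → α → R) (a b c d : α) (x y U V W : α → α) (d1 d2 : α → R)
    (xa : x a = b) (xb : x b = a) (xc : x c = c) (xd : x d = d)
    (ya : y a = a) (yb : y b = b) (yc : y c = d) (yd : y d = c)
    (Ua : U a = a) (Ub : U b = b) (Uc : U c = c) (Ud : U d = d)
    (Va : V a = a) (Vb : V b = b) (Vc : V c = c) (Vd : V d = d)
    (Wa : W a = a) (Wb : W b = b) (Wc : W c = c) (Wd : W d = d)
    (d1a : d1 a = 1) (d1b : d1 b = -1) (d1c : d1 c = 0) (d1d : d1 d = 0)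
    (d2a : d2 a = 0) (d2b : d2 b = 0) (d2c : d2 c = 1) (d2d : d2 d = -1)
    (hcls : ∀ i, i = a ∨ i = b ∨ i = c ∨ i = d ∨ (d1 i = 0 ∧ d2 i = 0 ∧
      ∃ i', x i = i ∧ y i = i ∧ x i' = i' ∧ y i' = i' ∧
      ((U i = i' ∧ U i' = i ∧ V i = i ∧ V i' = i' ∧ W i = i ∧ W i' = i') ∨
       (U i = i ∧ U i' = i' ∧ V i = i' ∧ V i' = i ∧ W i = i ∧ W i' = i') ∨
       (U i = i ∧ U i' = i' ∧ V i = i ∧ V i' = i' ∧ W i = i' ∧ W i' = i) ∨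
       (U i = i ∧ U i' = i' ∧ V i = i ∧ V i' = i' ∧ W i = i ∧ W i' = i')))) (i j : α) :
    dop (y ∘ V) (dop (y ∘ W) (dop (x ∘ V) (dop (x ∘ U) f))) i j =
      4 * (f a c - f b c - f a d + f b d) * (d1 i * d2 j) +
      4 * (f c a - f c b - f d a + f d b) * (d2 i * d1 j) := by
  rcases hcls i with rfl | rfl | rfl | rfl | ⟨i1, i2, i', i3, i4, i5, i6, i7⟩ <;>
  rcases hcls j with rfl | rfl | rfl | rfl | ⟨j1, j2, j', j3, j4, j5, j6, j7⟩
  all_goals try rcases i7 with ⟨k1, k2, k3, k4, k5, k6⟩ | ⟨k1, k2, k3, k4, k5, k6⟩ |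
    ⟨k1, k2, k3, k4, k5, k6⟩ | ⟨k1, k2, k3, k4, k5, k6⟩
  all_goals try rcases j7 with ⟨l1, l2, l3, l4, l5, l6⟩ | ⟨l1, l2, l3, l4, l5, l6⟩ |
    ⟨l1, l2, l3, l4, l5, l6⟩ | ⟨l1, l2, l3, l4, l5, l6⟩
  all_goals
    simp only [dop, Function.comp_apply, *]
    ring
end P10

section P11
variable {α : Type*} [Fintype α] [DecidableEq α] {p : ℕ} [Fact p.Prime]

/-- `e_a - e_b`. -/
def dl (R : Type*) [CommRing R] (a b : α) (i : α) : R := if i = a then 1 else if i = b then -1 else 0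

/-- The antisymmetrised quadruple element. -/
def Equad (ε : ZMod p) (a b c d : α) : α × α → ZMod p := fun x =>
  dl (ZMod p) a b x.1 * dl (ZMod p) c d x.2 + ε * (dl (ZMod p) c d x.1 * dl (ZMod p) a b x.2)

lemma swap_cls (u v i : α) : (i = u ∨ i = v) ∨ swap u v i = i := by
  by_cases h1 : i = u
  · exact Or.inl (Or.inl h1)
  by_cases h2 : i = v
  · exact Or.inl (Or.inr h2)
  exact Or.inr (swap_apply_of_ne_of_ne h1 h2)

lemma quad_mem (h2 : (2 : ZMod p) ≠ 0) (hα : 10 ≤ Fintype.card α)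
    (B : Submodule (ZMod p) (α × α → ZMod p))
    (hB : ∀ σ : Perm α, sign σ = 1 → ∀ v ∈ B, (fun x : α × α => v (σ x.1, σ x.2)) ∈ B)
    (ε : ZMod p) (f : α × α → ZMod p) (hf : f ∈ B) (hs : ∀ i j, f (j, i) = ε * f (i, j))
    (a b c d : α) (hab : a ≠ b) (hac : a ≠ c) (had : a ≠ d) (hbc : b ≠ c) (hbd : b ≠ d) (hcd : c ≠ d)
    (hq : f (a, c) - f (b, c) - f (a, d) + f (b, d) ≠ 0) : Equad ε a b c d ∈ B := by
  have hc4 : ({a, b, c, d} : Finset α).card ≤ 4 := Finset.card_le_four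
  obtain ⟨e, he, hes⟩ := exists_extra {a, b, c, d} 6 (by omega)
  have hea : ∀ i, e i ≠ a := fun i h => hes i (by simp [h])
  have heb : ∀ i, e i ≠ b := fun i h => hes i (by simp [h])
  have hec : ∀ i, e i ≠ c := fun i h => hes i (by simp [h])
  have hed : ∀ i, e i ≠ d := fun i h => hes i (by simp [h])
  have key : ∀ s t : Perm α, sign s = -1 → sign t = -1 → ∀ v ∈ B,
      (fun x : α × α => dop (s ∘ t) (fun i j => v (i, j)) x.1 x.2) ∈ B := by
    intro s t hs ht v hv
    exact sub_mem hv (hB (s * t) (by rw [Perm.sign_mul, hs, ht]; simp) v hv)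
  have sx : sign (swap a b) = -1 := sign_swap hab
  have sy : sign (swap c d) = -1 := sign_swap hcd
  have sU : sign (swap (e 0) (e 1)) = -1 := sign_swap (he.ne (by decide))
  have sV : sign (swap (e 2) (e 3)) = -1 := sign_swap (he.ne (by decide))
  have sW : sign (swap (e 4) (e 5)) = -1 := sign_swap (he.ne (by decide))
  have m := key _ _ sy sV _ (key _ _ sy sW _ (key _ _ sx sV _ (key _ _ sx sU f hf)))
  have h4 : (4 : ZMod p) ≠ 0 := by
    have : (4 : ZMod p) = 2 * 2 := by norm_num
    rw [this]; exact mul_ne_zero h2 h2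
  have hz := mul_ne_zero h4 hq
  have m' := Submodule.smul_mem B (4 * (f (a, c) - f (b, c) - f (a, d) + f (b, d)))⁻¹ m
  have fixe : ∀ i j x, x ≠ e i → x ≠ e j → swap (e i) (e j) x = x :=
    fun i j x h1 h2 => swap_apply_of_ne_of_ne h1 h2
  have fixx : ∀ i, swap a b (e i) = e i := fun i => swap_apply_of_ne_of_ne (hea i) (heb i)
  have fixy : ∀ i, swap c d (e i) = e i := fun i => swap_apply_of_ne_of_ne (hec i) (hed i)
  have fe : ∀ i j l, l ≠ i → l ≠ j → swap (e i) (e j) (e l) = e l :=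
    fun i j l h1 h2 => swap_apply_of_ne_of_ne (he.ne h1) (he.ne h2)
  convert m' using 1
  rw [eq_inv_smul_iff₀ hz]
  funext ⟨i, j⟩
  have tab := quad_table (fun i j => f (i, j)) a b c d (swap a b) (swap c d) (swap (e 0) (e 1))
    (swap (e 2) (e 3)) (swap (e 4) (e 5)) (dl (ZMod p) a b) (dl (ZMod p) c d)
    (swap_apply_left _ _) (swap_apply_right _ _) (swap_apply_of_ne_of_ne hac.symm hbc.symm)
    (swap_apply_of_ne_of_ne had.symm hbd.symm)
    (swap_apply_of_ne_of_ne hac had) (swap_apply_of_ne_of_ne hbc hbd)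
    (swap_apply_left _ _) (swap_apply_right _ _)
    (fixe _ _ _ (hea _).symm (hea _).symm) (fixe _ _ _ (heb _).symm (heb _).symm)
    (fixe _ _ _ (hec _).symm (hec _).symm) (fixe _ _ _ (hed _).symm (hed _).symm)
    (fixe _ _ _ (hea _).symm (hea _).symm) (fixe _ _ _ (heb _).symm (heb _).symm)
    (fixe _ _ _ (hec _).symm (hec _).symm) (fixe _ _ _ (hed _).symm (hed _).symm)
    (fixe _ _ _ (hea _).symm (hea _).symm) (fixe _ _ _ (heb _).symm (heb _).symm)
    (fixe _ _ _ (hec _).symm (hec _).symm) (fixe _ _ _ (hed _).symm (hed _).symm)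
    (by simp [dl]) (by simp [dl, hab.symm]) (by simp [dl, hac.symm, hbc.symm])
    (by simp [dl, had.symm, hbd.symm]) (by simp [dl, hac, had]) (by simp [dl, hbc, hbd])
    (by simp [dl]) (by simp [dl, hcd.symm]) ?_ i j
  · simp only [Pi.smul_apply, smul_eq_mul, Equad]
    refine Eq.trans ?_ tab.symm
    have e1 := hs a c
    have e2 := hs b c
    have e3 := hs a d
    have e4 := hs b d
    simp only [e1, e2, e3, e4]
    ring
  · intro i
    by_cases ia : i = a
    · exact Or.inl ia
    by_cases ib : i = b
    · exact Or.inr (Or.inl ib)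
    by_cases ic : i = c
    · exact Or.inr (Or.inr (Or.inl ic))
    by_cases id : i = d
    · exact Or.inr (Or.inr (Or.inr (Or.inl id)))
    refine Or.inr (Or.inr (Or.inr (Or.inr ⟨by simp [dl, ia, ib], by simp [dl, ic, id], ?_⟩)))
    by_cases hi : ∃ l, i = e l
    · obtain ⟨l, rfl⟩ := hi
      have hh : (l = 0 ∨ l = 1) ∨ (l = 2 ∨ l = 3) ∨ (l = 4 ∨ l = 5) := by
        clear ia ib ic id; revert l; decide
      rcases hh with (rfl | rfl) | (rfl | rfl) | (rfl | rfl)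
      · refine ⟨e 1, fixx _, fixy _, fixx _, fixy _, Or.inl ⟨swap_apply_left _ _, swap_apply_right _ _, ?_, ?_, ?_, ?_⟩⟩ <;>
          exact fe _ _ _ (by decide) (by decide)
      · refine ⟨e 0, fixx _, fixy _, fixx _, fixy _, Or.inl ⟨swap_apply_right _ _, swap_apply_left _ _, ?_, ?_, ?_, ?_⟩⟩ <;>
          exact fe _ _ _ (by decide) (by decide)
      · refine ⟨e 3, fixx _, fixy _, fixx _, fixy _, Or.inr (Or.inl ⟨?_, ?_, swap_apply_left _ _, swap_apply_right _ _, ?_, ?_⟩)⟩ <;>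
          exact fe _ _ _ (by decide) (by decide)
      · refine ⟨e 2, fixx _, fixy _, fixx _, fixy _, Or.inr (Or.inl ⟨?_, ?_, swap_apply_right _ _, swap_apply_left _ _, ?_, ?_⟩)⟩ <;>
          exact fe _ _ _ (by decide) (by decide)
      · refine ⟨e 5, fixx _, fixy _, fixx _, fixy _, Or.inr (Or.inr (Or.inl ⟨?_, ?_, ?_, ?_, swap_apply_left _ _, swap_apply_right _ _⟩))⟩ <;>
          exact fe _ _ _ (by decide) (by decide)
      · refine ⟨e 4, fixx _, fixy _, fixx _, fixy _, Or.inr (Or.inr (Or.inl ⟨?_, ?_, ?_, ?_, swap_apply_right _ _, swap_apply_left _ _⟩))⟩ <;>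
          exact fe _ _ _ (by decide) (by decide)
    · push Not at hi
      have f1 : ∀ l l', swap (e l) (e l') i = i := fun l l' => fixe _ _ _ (hi l) (hi l')
      have f2 := swap_apply_of_ne_of_ne ia ib
      have f3 := swap_apply_of_ne_of_ne ic id
      exact ⟨i, f2, f3, f2, f3, Or.inr (Or.inr (Or.inr ⟨f1 _ _, f1 _ _, f1 _ _, f1 _ _, f1 _ _, f1 _ _⟩))⟩

lemma dl_comp (g : Perm α) (a b i : α) (R : Type*) [CommRing R] :
    dl R (g a) (g b) (g i) = dl R a b i := by
  simp [dl]

lemma quad_mem_all (hα : 10 ≤ Fintype.card α)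
    (B : Submodule (ZMod p) (α × α → ZMod p))
    (hB : ∀ σ : Perm α, sign σ = 1 → ∀ v ∈ B, (fun x : α × α => v (σ x.1, σ x.2)) ∈ B)
    (ε : ZMod p)
    (a b c d : α) (hab : a ≠ b) (hac : a ≠ c) (had : a ≠ d) (hbc : b ≠ c) (hbd : b ≠ d) (hcd : c ≠ d)
    (hE : Equad ε a b c d ∈ B) (a' b' c' d' : α)
    (hab' : a' ≠ b') (hac' : a' ≠ c') (had' : a' ≠ d') (hbc' : b' ≠ c') (hbd' : b' ≠ d') (hcd' : c' ≠ d') :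
    Equad ε a' b' c' d' ∈ B := by
  obtain ⟨g, hg⟩ := alt_trans 4 (by omega) ![a', b', c', d'] ![a, b, c, d]
    (by intro i j; fin_cases i <;> fin_cases j <;> simp [*, Ne.symm])
    (by intro i j; fin_cases i <;> fin_cases j <;> simp [*, Ne.symm])
  have g0 : (g : Perm α) a' = a := hg 0
  have g1 : (g : Perm α) b' = b := hg 1
  have g2 : (g : Perm α) c' = c := hg 2
  have g3 : (g : Perm α) d' = d := hg 3
  have := hB (g : Perm α) (mem_alternatingGroup.1 g.2) _ hE
  convert this using 1
  funext x
  simp only [Equad, ← g0, ← g1, ← g2, ← g3, dl_comp]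

lemma ker_partial_le (h2 : (2 : ZMod p) ≠ 0) (hα : 10 ≤ Fintype.card α)
    (B : Submodule (ZMod p) (α × α → ZMod p)) (ε : ZMod p) (hε : ε = 1 ∨ ε = -1)
    (hE : ∀ a b c d : α, a ≠ b → a ≠ c → a ≠ d → b ≠ c → b ≠ d → c ≠ d → Equad ε a b c d ∈ B)
    (f : α × α → ZMod p) (hs : ∀ i j, f (j, i) = ε * f (i, j)) (hd : ∀ i, f (i, i) = 0)
    (hf : ∀ i, ∑ j, f (i, j) = 0) : f ∈ B := by
  by_contra hc
  obtain ⟨l, hlf, hlB⟩ := Submodule.exists_le_ker_of_notMem hc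
  have hεε : ε * ε = 1 := by rcases hε with rfl | rfl <;> ring
  let s : α → α → (α × α → ZMod p) := fun i j => Pi.single (i, j) 1
  let F : α → α → ZMod p := fun i j => l (s i j + ε • s j i)
  have hF : ∀ i j, F j i = ε * F i j := by
    intro i j
    simp only [F, map_add, map_smul, smul_eq_mul]
    linear_combination (- l (s j i)) * hεε
  have hEs : ∀ a b c d : α, a ≠ b → c ≠ d → Equad ε a b c d =
      (s a c + ε • s c a) - (s b c + ε • s c b) - (s a d + ε • s d a) + (s b d + ε • s d b) := by
    intro a b c d hab hcd
    have hdl : ∀ a b : α, a ≠ b → dl (ZMod p) a b = (Pi.single a 1 - Pi.single b 1 : α → ZMod p) := by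
      intro a b hab
      funext i
      simp only [dl, Pi.sub_apply, Pi.single_apply]
      by_cases h1 : i = a
      · subst h1; simp [hab]
      · simp [h1]
        by_cases h2 : i = b <;> simp [h2]
    have hss : ∀ i j x, s i j x = (Pi.single i 1 : α → ZMod p) x.1 * (Pi.single j 1 : α → ZMod p) x.2 := by
      intro i j x
      obtain ⟨x1, x2⟩ := x
      simp only [s, Pi.single_apply, Prod.mk.injEq]
      by_cases h1 : x1 = i <;> by_cases h2 : x2 = j <;> simp [h1, h2]
    funext x
    simp only [Equad, hdl a b hab, hdl c d hcd, Pi.add_apply, Pi.sub_apply, Pi.smul_apply, smul_eq_mul, hss]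
    ring
  obtain ⟨G, hG⟩ := quad_eps h2 (by omega) ε hε F hF (by
    intro a b c d hab hac had hbc hbd hcd
    have h0 : l (Equad ε a b c d) = 0 := hlB (hE a b c d hab hac had hbc hbd hcd)
    rw [hEs a b c d hab hcd, map_add, map_sub, map_sub] at h0
    exact h0)
  have hfs : f = ∑ i, ∑ j, f (i, j) • s i j := by
    rw [← Finset.sum_product' (f := fun i j => f (i, j) • s i j)]
    rw [Finset.univ_product_univ]
    exact pi_eq_sum_univ' f
  have hlf1 : l f = ∑ i, ∑ j, f (i, j) * l (s i j) := by
    conv_lhs => rw [hfs]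
    simp only [map_sum, map_smul, smul_eq_mul]
  have hlf2 : l f = ∑ i, ∑ j, f (i, j) * (ε * l (s j i)) := by
    rw [hlf1, Finset.sum_comm]
    refine Finset.sum_congr rfl fun i _ => Finset.sum_congr rfl fun j _ => ?_
    rw [hs i j]; ring
  have hz : 2 * l f = 0 := by
    have e1 : 2 * l f = ∑ i, ∑ j, f (i, j) * F i j := by
      rw [two_mul]
      nth_rewrite 1 [hlf1]
      rw [hlf2, ← Finset.sum_add_distrib]
      refine Finset.sum_congr rfl fun i _ => ?_
      rw [← Finset.sum_add_distrib]
      refine Finset.sum_congr rfl fun j _ => ?_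
      simp only [F, map_add, map_smul, smul_eq_mul]
      ring
    have e2 : ∀ i j, f (i, j) * F i j = f (i, j) * G i + f (j, i) * G j := by
      intro i j
      by_cases hij : i = j
      · subst hij; rw [hd]; ring
      · rw [hG i j hij, hs i j]; ring
    have e3 : ∑ i, ∑ j, f (i, j) * G i = 0 := by
      refine Finset.sum_eq_zero fun i _ => ?_
      rw [← Finset.sum_mul, hf, zero_mul]
    simp only [e1, e2, Finset.sum_add_distrib, e3]
    rw [Finset.sum_comm, e3, add_zero]
  exact hlf ((mul_eq_zero.1 hz).resolve_left h2)
end P11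

section P12
variable {H : Type*} [Group H] {α : Type*} [Fintype α] [DecidableEq α]

lemma mem_Dfix_one (π : H →* alternatingGroup α) (o : α) (h : H) :
    h ∈ Dfix π ({o}ᶜ) ↔ pt π h o = o := by
  rw [mem_Dfix]
  constructor
  · intro hh; exact hh o (by simp)
  · intro hh x hx
    have : x = o := by simpa using hx
    rw [this]; exact hh

lemma mem_Dfix_two (π : H →* alternatingGroup α) (o1 o2 : α) (h : H) :
    h ∈ Dfix π ({o1, o2}ᶜ) ↔ pt π h o1 = o1 ∧ pt π h o2 = o2 := by
  rw [mem_Dfix]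
  constructor
  · intro hh; exact ⟨hh o1 (by simp), hh o2 (by simp)⟩
  · intro hh x hx
    have : x = o1 ∨ x = o2 := by
      rw [Finset.mem_compl, not_not, Finset.mem_insert, Finset.mem_singleton] at hx
      exact hx
    rcases this with rfl | rfl
    · exact hh.1
    · exact hh.2

lemma alt_hom_trivial {β : Type*} [Fintype β] [DecidableEq β] (hβ : 5 ≤ Fintype.card β)
    {G A : Type*} [Group G] [AddCommGroup A] (ρ : G →* alternatingGroup β)
    (hρ : Function.Surjective ρ) (φ : G → A) (hφ : ∀ a b, φ (a * b) = φ a + φ b)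
    (hk : ∀ g ∈ ρ.ker, φ g = 0) (g : G) : φ g = 0 := by
  choose s hs using hρ
  have hwd : ∀ a b, ρ a = ρ b → φ a = φ b := by
    intro a b hab
    have h1 : φ (a * b⁻¹) = 0 := hk _ (by rw [MonoidHom.mem_ker, map_mul, map_inv, hab]; simp)
    have h2 := hφ (a * b⁻¹) b
    rw [inv_mul_cancel_right, h1, zero_add] at h2
    exact h2
  have h5 : 5 ≤ Nat.card β := by rw [Nat.card_eq_fintype_card]; exact hβ
  have := perf_hom (commutator_alternatingGroup_eq_top h5) (fun x => φ (s x)) (by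
    intro a b
    rw [← hφ]
    apply hwd
    rw [map_mul, hs, hs, hs]) (ρ g)
  rw [← this]
  exact hwd _ _ (hs _).symm

lemma coboundary (π : H →* alternatingGroup α) (hπ : Function.Surjective π)
    (hα : 6 ≤ Fintype.card α) {A : Type*} [AddCommGroup A] (u : H → α → A) (hu : IsCr (pt π) u)
    (hk : ∀ m ∈ π.ker, u m = 0) :
    ∃ y : α → A, ∀ h x, u h x = y x - y ((pt π h)⁻¹ x) := by
  have hne : Nonempty α := Fintype.card_pos_iff.1 (by omega)
  obtain ⟨o⟩ := hne
  obtain ⟨ρ, hρ, hρe, hρk⟩ := exists_restrict π hπ ({o}ᶜ)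
  have h0 : ∀ h, pt π h o = o → u h o = 0 := by
    intro h hh
    refine alt_hom_trivial (by
      rw [Fintype.card_coe, Finset.card_compl, Finset.card_singleton]; omega) ρ hρ
      (fun d => u (d : H) o) ?_ ?_ ⟨h, (mem_Dfix_one π o h).2 hh⟩
    · rintro ⟨a, ha⟩ ⟨b, hb⟩
      show u (a * b) o = u a o + u b o
      rw [hu]
      have : (pt π a)⁻¹ o = o := by
        rw [Perm.inv_eq_iff_eq]; exact ((mem_Dfix_one π o a).1 ha).symm
      rw [this]
    · intro g hg
      rw [hρk] at hg
      show u (g : H) o = 0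
      rw [hk (g : H) (Subgroup.mem_subgroupOf.1 hg)]; rfl
  have ht : ∀ x, ∃ t, pt π t o = x := by
    intro x
    obtain ⟨g, hg⟩ := alt_trans 1 (by omega) ![o] ![x] (fun i j _ => Subsingleton.elim _ _)
      (fun i j _ => Subsingleton.elim _ _)
    obtain ⟨t, rfl⟩ := hπ g
    exact ⟨t, hg 0⟩
  choose t ht using ht
  have hy : ∀ g x, pt π g o = x → u g x = u (t x) x := by
    intro g x hg
    have e : g = t x * ((t x)⁻¹ * g) := by group
    have h1 : pt π ((t x)⁻¹ * g) o = o := by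
      rw [map_mul, Perm.mul_apply, hg, map_inv, Perm.inv_eq_iff_eq, ht]
    have h2 : (pt π (t x))⁻¹ x = o := by rw [Perm.inv_eq_iff_eq, ht]
    rw [e, hu, h2, h0 _ h1, add_zero]
  refine ⟨fun x => u (t x) x, ?_⟩
  intro h x
  have h1 := hy (h * t ((pt π h)⁻¹ x)) x (by rw [map_mul, Perm.mul_apply, ht]; simp)
  rw [hu] at h1
  exact eq_sub_of_add_eq h1

/-- Diagonal action on pairs. -/
def pairHom : Perm α →* Perm (α × α) where
  toFun σ := Equiv.prodCongr σ σ
  map_one' := rfl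
  map_mul' _ _ := rfl

/-- The permutation action on pairs. -/
abbrev pr (π : H →* alternatingGroup α) : H →* Perm (α × α) := pairHom.comp (pt π)

lemma pr_inv (π : H →* alternatingGroup α) (g : H) (x : α × α) :
    (pr π g)⁻¹ x = ((pt π g)⁻¹ x.1, (pt π g)⁻¹ x.2) := rfl

lemma pr_ker (π : H →* alternatingGroup α) (m : H) (hm : m ∈ π.ker) : pr π m = 1 := by
  show pairHom (pt π m) = 1
  rw [pt_ker π m hm, map_one]

lemma partial_lift {p : ℕ} [Fact p.Prime] (h2 : (2 : ZMod p) ≠ 0) (hα : 8 ≤ Fintype.card α)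
    (hk : (Fintype.card α : ZMod p) ≠ 0) (ε : ZMod p) (hε : ε = 1 ∨ ε = -1) (y : α → ZMod p) :
    ∃ x : α × α → ZMod p, ∃ z : ZMod p, (∀ i j, x (j, i) = ε * x (i, j)) ∧ (∀ i, x (i, i) = 0) ∧
      ∀ i, ∑ j, x (i, j) = y i - z := by
  rcases hε with rfl | rfl
  · let W : Submodule (ZMod p) (α → ZMod p) :=
      { carrier := {y | ∃ x : α × α → ZMod p, (∀ i j, x (j, i) = x (i, j)) ∧ (∀ i, x (i, i) = 0) ∧
          ∀ i, ∑ j, x (i, j) = y i}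
        zero_mem' := ⟨0, by simp, by simp, by simp⟩
        add_mem' := by
          rintro a b ⟨x, x1, x2, x3⟩ ⟨x', x1', x2', x3'⟩
          refine ⟨x + x', fun i j => by simp [x1 i j, x1' i j], fun i => by simp [x2, x2'], fun i => ?_⟩
          simp [Finset.sum_add_distrib, x3, x3']
        smul_mem' := by
          rintro r a ⟨x, x1, x2, x3⟩
          refine ⟨r • x, fun i j => by simp [x1 i j], fun i => by simp [x2], fun i => ?_⟩
          simp [← Finset.mul_sum, x3] }
    have hW : ∀ i : α, (Pi.single i 1 : α → ZMod p) ∈ W := by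
      intro i
      obtain ⟨e, hei, he⟩ := exists_extra {i} 2 (by rw [Finset.card_singleton]; omega)
      have h0 : e 0 ≠ i := fun h => he 0 (by simp [h])
      have h1 : e 1 ≠ i := fun h => he 1 (by simp [h])
      have h01 : e 0 ≠ e 1 := hei.ne (by decide)
      generalize e 0 = j at *
      generalize e 1 = l at *
      let s : α → α → ZMod p := fun a b => (Pi.single a 1 : α → ZMod p) b
      have hs : ∀ a, ∑ b, s a b = 1 := by intro a; simp [s]
      have hs0 : ∀ a b x, a ≠ b → s a x * s b x = 0 := by
        intro a b x hab
        simp only [s, Pi.single_apply]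
        by_cases hx : x = a
        · subst hx; simp [hab]
        · simp [hx]
      refine ⟨fun x => 2⁻¹ * (s i x.1 * s j x.2 + s j x.1 * s i x.2 + s i x.1 * s l x.2 + s l x.1 * s i x.2
        - s j x.1 * s l x.2 - s l x.1 * s j x.2), ?_, ?_, ?_⟩
      · intro a b; ring
      · intro a
        have a1 := hs0 i j a h0.symm
        have a2 := hs0 i l a h1.symm
        have a3 := hs0 j l a h01
        linear_combination 2⁻¹ * (2 * a1 + 2 * a2 - 2 * a3)
      · intro a
        simp only [← Finset.mul_sum, Finset.sum_add_distrib, Finset.sum_sub_distrib, hs]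
        show _ = s i a
        field_simp
        ring
    have hy : y ∈ W := by
      have : y = ∑ i, y i • (Pi.single i 1 : α → ZMod p) := pi_eq_sum_univ' y
      rw [this]
      exact Submodule.sum_mem _ fun i _ => Submodule.smul_mem _ _ (hW i)
    obtain ⟨x, x1, x2, x3⟩ := hy
    exact ⟨x, 0, fun i j => by rw [one_mul]; exact x1 i j, x2, fun i => by rw [x3, sub_zero]⟩
  · refine ⟨fun x => (Fintype.card α : ZMod p)⁻¹ * (y x.1 - y x.2),
      (Fintype.card α : ZMod p)⁻¹ * ∑ j, y j, ?_, ?_, ?_⟩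
    · intro i j; ring
    · intro i; ring
    · intro i
      simp only [← Finset.mul_sum, Finset.sum_sub_distrib, Finset.sum_const, Finset.card_univ, nsmul_eq_mul]
      field_simp
end P12

section P13
variable {H : Type*} [Group H] [Finite H] {α : Type*} [Fintype α] [DecidableEq α]

/-- Standing assumptions on the extension. -/
structure Good (π : H →* alternatingGroup α) : Prop where
  surj : Function.Surjective π
  Fr : ∀ K : Subgroup H, K.map π = ⊤ → K = ⊤
  perf : commutator H = ⊤
  odd : Odd (Nat.card π.ker)
  card : 10 ≤ Fintype.card α
  two : ∀ q, q.Prime → q ∣ Nat.card π.ker → (2 : ZMod q) ≠ 0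
  deg : ∀ q, q.Prime → q ∣ Nat.card π.ker → (Fintype.card α : ZMod q) ≠ 0

lemma core_no_quad {π : H →* alternatingGroup α} (hG : Good π) {p : ℕ} [Fact p.Prime]
    (hpd : p ∣ Nat.card π.ker) (ε : ZMod p) (hε : ε = 1 ∨ ε = -1) (c : H → α × α → ZMod p)
    (hc : IsCr (pr π) c) (hs : ∀ h i j, c h (j, i) = ε * c h (i, j)) (hd : ∀ h i, c h (i, i) = 0)
    (hpar : ∀ m ∈ π.ker, ∀ i, ∑ j, c m (i, j) = 0)
    (hq : ∀ m ∈ π.ker, ∀ a b e d, a ≠ b → a ≠ e → a ≠ d → b ≠ e → b ≠ d → e ≠ d →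
      c m (a, e) - c m (b, e) - c m (a, d) + c m (b, d) = 0) : ∀ m ∈ π.ker, c m = 0 := by
  have hα := hG.card
  have h2 := hG.two p Fact.out hpd
  have hk := hG.deg p Fact.out hpd
  rcases hε with rfl | rfl
  · -- symmetric case
    have hGm : ∀ m : H, ∃ G : α → ZMod p, m ∈ π.ker →
        (∀ i a b, i ≠ a → i ≠ b → a ≠ b → 2 * G i = c m (i, a) + c m (i, b) - c m (a, b)) ∧
        ∀ i j, i ≠ j → c m (i, j) = G i + G j := by
      intro m
      by_cases hm : m ∈ π.ker
      · obtain ⟨G, hG1⟩ := quad_plus h2 (by omega) (fun i j => c m (i, j)) (by simpa using hs m) (hq m hm)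
        exact ⟨G, fun _ => hG1⟩
      · exact ⟨0, fun h => absurd h hm⟩
    choose G hGG using hGm
    by_cases hz : ∀ m ∈ π.ker, ∀ o, G m o = 0
    · intro m hm
      funext ⟨i, j⟩
      by_cases hij : i = j
      · subst hij; exact hd m i
      · rw [(hGG m hm).2 i j hij, hz m hm, hz m hm]; simp
    · exfalso
      push Not at hz
      obtain ⟨m, hm, o, hmo⟩ := hz
      obtain ⟨e, hei, he⟩ := exists_extra {o} 2 (by rw [Finset.card_singleton]; omega)
      have h0 : o ≠ e 0 := fun h => he 0 (by simp [h])
      have h1 : o ≠ e 1 := fun h => he 1 (by simp [h])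
      have h01 : e 0 ≠ e 1 := hei.ne (by decide)
      have hadd : ∀ a ∈ π.ker, ∀ b ∈ π.ker, G (a * b) o = G a o + G b o := by
        intro a ha b hb
        have e1 := (hGG a ha).1 o _ _ h0 h1 h01
        have e2 := (hGG b hb).1 o _ _ h0 h1 h01
        have e3 := (hGG _ (mul_mem ha hb)).1 o _ _ h0 h1 h01
        have e4 : ∀ x, c (a * b) x = c a x + c b x := by
          intro x
          rw [hc, pr_ker π a ha]; simp
        rw [e4, e4, e4] at e3
        apply mul_left_cancel₀ h2
        linear_combination e3 - e1 - e2
      have hinvt : ∀ g, pt π g o = o → ∀ a ∈ π.ker, G (g * a * g⁻¹) o = G a o := by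
        intro g hg a ha
        have hgo : (pt π g)⁻¹ o = o := by rw [Perm.inv_eq_iff_eq, hg]
        have ha' : g * a * g⁻¹ ∈ π.ker := (MonoidHom.normal_ker π).conj_mem a ha g
        have e3 := (hGG _ ha').1 o _ _ h0 h1 h01
        rw [hc.conj (pr_ker π a ha), hc.conj (pr_ker π a ha), hc.conj (pr_ker π a ha), pr_inv, pr_inv, pr_inv] at e3
        simp only [hgo] at e3
        have e1 := (hGG a ha).1 o ((pt π g)⁻¹ (e 0)) ((pt π g)⁻¹ (e 1))
          (by intro h; rw [eq_comm, Perm.inv_eq_iff_eq, hg] at h; exact h0 h.symm)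
          (by intro h; rw [eq_comm, Perm.inv_eq_iff_eq, hg] at h; exact h1 h.symm)
          (fun h => h01 ((pt π g)⁻¹.injective h))
        apply mul_left_cancel₀ h2
        rw [e3, e1]
      obtain ⟨ρ, hρ, hρe, hρk⟩ := exists_restrict π hG.surj ({o}ᶜ)
      have hck : Nat.card ρ.ker = Nat.card π.ker := by rw [hρk]; exact card_ker_restrict π _
      have hmk : ∀ n : ρ.ker, ((n : Dfix π ({o}ᶜ)) : H) ∈ π.ker := by
        rintro ⟨n, hn⟩
        rw [hρk] at hn
        exact Subgroup.mem_subgroupOf.1 hn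
      let χ : ρ.ker →* Multiplicative (ZMod p) :=
        MonoidHom.mk' (fun n => Multiplicative.ofAdd (G ((n : Dfix π ({o}ᶜ)) : H) o)) (by
          intro a b
          exact congrArg Multiplicative.ofAdd (hadd _ (hmk a) _ (hmk b)))
      have hmD : m ∈ Dfix π ({o}ᶜ) := ker_le_Dfix π _ hm
      have hmρ : (⟨m, hmD⟩ : Dfix π ({o}ᶜ)) ∈ ρ.ker := by
        rw [hρk]; exact Subgroup.mem_subgroupOf.2 hm
      obtain ⟨q, hq, hqd, ψ, n, hn, hψ⟩ := extend_char ρ hρ (by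
        rw [Fintype.card_coe, Finset.card_compl, Finset.card_singleton]; omega)
        (by rw [hck]; exact hG.odd) χ ⟨⟨_, hmρ⟩, fun h => hmo h⟩ (by
          intro g a
          exact congrArg Multiplicative.ofAdd (hinvt g ((mem_Dfix_one π o _).1 g.2) _ (hmk a)))
      rw [hck] at hqd
      have hqf : Fact q.Prime := ⟨hq⟩
      classical
      obtain ⟨c1, hc1, hc2⟩ := shapiro (pt π) o
        (fun h => if hh : h ∈ Dfix π ({o}ᶜ) then Multiplicative.toAdd (ψ ⟨h, hh⟩) else 0) (by
          intro a b ha hb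
          have ha' := (mem_Dfix_one π o a).2 ha
          have hb' := (mem_Dfix_one π o b).2 hb
          rw [dif_pos ha', dif_pos hb', dif_pos (mul_mem ha' hb'), ← toAdd_mul, ← map_mul]
          rfl)
      have hL := L1 π hG.surj hG.Fr hG.perf (by omega) (hG.two q hq hqd) (hG.deg q hq hqd) c1 hc1
        n (hmk ⟨n, hn⟩)
      have := hc2 n ((mem_Dfix_one π o _).1 n.2)
      rw [hL, dif_pos n.2] at this
      exact hψ this.symm
  · intro m hm
    obtain ⟨G, hGG⟩ := quad_minus h2 (by omega) (fun i j => c m (i, j)) (by simpa using hs m) (hq m hm)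
    have hGG' : ∀ i j, c m (i, j) = G i - G j := by
      intro i j
      by_cases hij : i = j
      · subst hij; rw [hd, sub_self]
      · exact hGG i j hij
    have hcs : ∀ i, (Fintype.card α : ZMod p) * G i = ∑ j, G j := by
      intro i
      have := hpar m hm i
      simp only [hGG', Finset.sum_sub_distrib, Finset.sum_const, Finset.card_univ, nsmul_eq_mul] at this
      exact sub_eq_zero.1 this
    funext ⟨i, j⟩
    rw [hGG', mul_left_cancel₀ hk ((hcs i).trans (hcs j).symm), sub_self]; rfl

lemma pair_core {π : H →* alternatingGroup α} (hG : Good π) {p : ℕ} [Fact p.Prime]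
    (hpd : p ∣ Nat.card π.ker) (ε : ZMod p) (hε : ε = 1 ∨ ε = -1) (c : H → α × α → ZMod p)
    (hc : IsCr (pr π) c) (hs : ∀ h i j, c h (j, i) = ε * c h (i, j)) (hd : ∀ h i, c h (i, i) = 0) :
    ∀ m ∈ π.ker, c m = 0 := by
  have hα := hG.card
  have h2 := hG.two p Fact.out hpd
  have hk := hG.deg p Fact.out hpd
  let u : H → α → ZMod p := fun h i => ∑ j, c h (i, j)
  have hu : IsCr (pt π) u := by
    intro g h i
    show ∑ j, c (g * h) (i, j) = ∑ j, c g (i, j) + ∑ j, c h ((pt π g)⁻¹ i, j)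
    simp only [hc g h, Finset.sum_add_distrib, pr_inv]
    congr 1
    exact Equiv.sum_comp ((pt π g)⁻¹) (fun j => c h ((pt π g)⁻¹ i, j))
  have hu0 := L1 π hG.surj hG.Fr hG.perf (by omega) h2 hk u hu
  by_cases hq : ∀ m ∈ π.ker, ∀ a b e d, a ≠ b → a ≠ e → a ≠ d → b ≠ e → b ≠ d → e ≠ d →
      c m (a, e) - c m (b, e) - c m (a, d) + c m (b, d) = 0
  · exact core_no_quad hG hpd ε hε c hc hs hd (fun m hm i => congrFun (hu0 m hm) i) hq
  · push Not at hq
    obtain ⟨m, hm, a, b, e, d, hab, hae, had, hbe, hbd, hed, hne⟩ := hq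
    obtain ⟨B, hB1, hB2⟩ := hc.sub π (pr_ker π)
    have hB : ∀ σ : Perm α, sign σ = 1 → ∀ v ∈ B, (fun x : α × α => v (σ x.1, σ x.2)) ∈ B := by
      intro σ hσ v hv
      obtain ⟨g, hg⟩ := exists_pt π hG.surj σ⁻¹ (by rw [Perm.sign_inv, hσ])
      have := hB2 g v hv
      simp only [pr_inv, hg, inv_inv] at this
      exact this
    have hE := quad_mem h2 hα B hB ε (c m) ((hB1 _).2 ⟨m, hm, rfl⟩) (hs m) a b e d hab hae had hbe hbd hed hne
    have hE' := quad_mem_all hα B hB ε a b e d hab hae had hbe hbd hed hE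
    have hker := ker_partial_le h2 hα B ε hε hE'
    obtain ⟨y, hy⟩ := coboundary π hG.surj (by omega) u hu hu0
    obtain ⟨x, z, x1, x2, x3⟩ := partial_lift h2 (by omega) hk ε hε y
    let c' : H → α × α → ZMod p := fun h w => c h w - (x w - x ((pr π h)⁻¹ w))
    have hc' : IsCr (pr π) c' := by
      intro g h w
      simp only [c', hc g h]
      rw [map_mul, mul_inv_rev, Perm.mul_apply]
      ring
    have hcm : ∀ m ∈ π.ker, c' m = c m := by
      intro m hm
      funext w
      simp only [c', pr_ker π m hm]
      simp
    have hall := hc'.supp π (pr_ker π) hG.Fr hG.surj (by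
      intro h
      obtain ⟨m, hm, e⟩ := (hB1 (c' h)).1 (by
        apply hker
        · intro i j
          simp only [c', pr_inv]
          rw [hs h i j, x1 i j, x1 ((pt π h)⁻¹ i)]
          ring
        · intro i
          simp only [c', pr_inv]
          rw [hd, x2, x2]; ring
        · intro i
          simp only [c', pr_inv, Finset.sum_sub_distrib]
          have e1 : ∑ j, x ((pt π h)⁻¹ i, (pt π h)⁻¹ j) = y ((pt π h)⁻¹ i) - z := by
            rw [← x3]
            exact Equiv.sum_comp ((pt π h)⁻¹) (fun j => x ((pt π h)⁻¹ i, j))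
          have e2 : ∑ j, c h (i, j) = y i - y ((pt π h)⁻¹ i) := hy h i
          rw [e1, e2, x3]; ring)
      exact ⟨m, hm, by rw [hcm m hm, e]⟩)
    intro m' hm'
    rw [← hcm m' hm']
    exact hall m'

lemma no_pair_char {π : H →* alternatingGroup α} (hG : Good π) {p : ℕ} (hp : p.Prime)
    (hpd : p ∣ Nat.card π.ker) (o1 o2 : α) (ho : o1 ≠ o2)
    (φ : Dfix π ({o1, o2}ᶜ) →* Multiplicative (ZMod p)) (m : Dfix π ({o1, o2}ᶜ))
    (hm : (m : H) ∈ π.ker) (hφ : φ m ≠ 1) : False := by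
  have hpf : Fact p.Prime := ⟨hp⟩
  have h2 := hG.two p hp hpd
  have hpr : ∀ h, pr π h (o1, o2) = (o1, o2) → h ∈ Dfix π ({o1, o2}ᶜ) := by
    intro h hh
    have : (pt π h o1, pt π h o2) = (o1, o2) := hh
    rw [Prod.mk.injEq] at this
    exact (mem_Dfix_two π o1 o2 h).2 this
  classical
  obtain ⟨c0, hc0, hc1⟩ := shapiro (pr π) (o1, o2)
    (fun h => if hh : h ∈ Dfix π ({o1, o2}ᶜ) then Multiplicative.toAdd (φ ⟨h, hh⟩) else 0) (by
      intro a b ha hb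
      have ha' := hpr a ha
      have hb' := hpr b hb
      rw [dif_pos ha', dif_pos hb', dif_pos (mul_mem ha' hb'), ← toAdd_mul, ← map_mul]
      rfl)
  have hne : c0 m (o1, o2) ≠ 0 := by
    rw [hc1 m (by rw [pr_ker π _ hm]; rfl), dif_pos m.2]
    exact fun h => hφ h
  have key : ∀ ε : ZMod p, (ε = 1 ∨ ε = -1) → c0 m (o1, o2) + ε * c0 m (o2, o1) = 0 := by
    intro ε hε
    have hεε : ε * ε = 1 := by rcases hε with rfl | rfl <;> ring
    let c : H → α × α → ZMod p := fun h x =>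
      if x.1 = x.2 then 0 else c0 h x + ε * c0 h (x.2, x.1)
    have := pair_core hG hpd ε hε c (by
      intro g h x
      simp only [c, pr_inv, EmbeddingLike.apply_eq_iff_eq]
      by_cases hx : x.1 = x.2
      · simp [hx]
      · simp only [if_neg hx, hc0 g h, pr_inv]
        ring) (by
      intro h i j
      simp only [c]
      by_cases hij : i = j
      · simp [hij]
      · simp only [if_neg hij, if_neg (Ne.symm hij)]
        linear_combination (- c0 h (j, i)) * hεε) (by
      intro h i
      simp [c]) m hm
    have h1 := congrFun this (o1, o2)
    simp only [c, if_neg ho] at h1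
    exact h1
  have k1 := key 1 (Or.inl rfl)
  have k2 := key (-1) (Or.inr rfl)
  have : 2 * c0 m (o1, o2) = 0 := by linear_combination k1 + k2
  exact hne ((mul_eq_zero.1 this).resolve_left h2)
end P13

section P14

lemma core_bound {H : Type*} [Group H] [Finite H] {k : ℕ} (hk : 22 < k)
    (π : H →* alternatingGroup (Fin k)) (hπ : Function.Surjective π)
    (Fr : ∀ K : Subgroup H, K.map π = ⊤ → K = ⊤) (hne : π.ker ≠ ⊥)
    (hgcd : Nat.Coprime (2 * k) (Nat.card π.ker))
    (n : ℕ) (f : H →* Equiv.Perm (Fin n)) (hf : Function.Injective f) :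
    k * (k - 1) * (k - 2) ≤ 2 * n := by
  by_contra hn
  push Not at hn
  have hodd : Odd (Nat.card π.ker) := by
    have : Nat.Coprime 2 (Nat.card π.ker) := Nat.Coprime.coprime_mul_right hgcd
    exact Nat.coprime_two_left.1 this
  have hdvd : ∀ q t : ℕ, q.Prime → q ∣ Nat.card π.ker → t ∣ 2 * k → (t : ZMod q) ≠ 0 := by
    intro q t hq hqd ht h
    rw [ZMod.natCast_eq_zero_iff] at h
    have := Nat.dvd_gcd (h.trans ht) hqd
    rw [hgcd] at this
    exact hq.one_lt.ne' (Nat.dvd_one.1 this)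
  have hperf : commutator H = ⊤ := by
    apply Fr
    rw [commutator_def, Subgroup.map_commutator, ← MonoidHom.range_eq_map,
      MonoidHom.range_eq_top.2 hπ, ← commutator_def]
    exact commutator_alternatingGroup_eq_top (by simp; omega)
  have hfr : π.ker ≤ frattini H := by
    rw [frattini, Order.radical]
    refine le_iInf₂ fun K hK => ?_
    by_contra hle
    have hs : K ⊔ π.ker = ⊤ := hK.2 _ (left_lt_sup.2 hle)
    apply hK.1
    apply Fr
    have h1 : (K ⊔ π.ker).map π = K.map π := by
      rw [Subgroup.map_sup, (Subgroup.map_eq_bot_iff _).2 le_rfl, sup_bot_eq]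
    rw [← h1, hs, ← MonoidHom.range_eq_map, MonoidHom.range_eq_top.2 hπ]
  have hnil : Group.IsNilpotent π.ker := by
    have h1 : Group.IsNilpotent (frattini H) := frattini_nilpotent
    exact Group.nilpotent_of_mulEquiv (Subgroup.subgroupOfEquivOfLe hfr)
  obtain ⟨o1, o2, ho, p, hp, hpd, φ, m, hm, hφ⟩ := stage5b hk π hπ Fr hnil hne hodd n f hf hn
  refine no_pair_char ?_ hp hpd o1 o2 ho φ m hm hφ
  refine ⟨hπ, Fr, hperf, hodd, by simp; omega, ?_, ?_⟩
  · intro q hq hqd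
    exact_mod_cast hdvd q 2 hq hqd (dvd_mul_right _ _)
  · intro q hq hqd
    exact hdvd q _ hq hqd (by rw [Fintype.card_fin]; exact dvd_mul_left _ _)

end P14

theorem nonsplit_extension_odd_order_kernel_min_degree
    (k : ℕ) (hk : 22 < k)
    (H : Type*) [Group H] [Finite H]
    (M : Subgroup H) [M.Normal] (hM : M ≠ ⊥)
    (hgcd : Nat.gcd (2 * k) (Nat.card M) = 1)
    (iso : H ⧸ M ≃* alternatingGroup (Fin k))
    (nonsplit : ¬ ∃ K : Subgroup H, M.IsComplement' K)
    (n : ℕ) (f : H →* Equiv.Perm (Fin n)) (hf : Function.Injective f) :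
    k * (k - 1) * (k - 2) ≤ 2 * n := by
  let π : H →* alternatingGroup (Fin k) := iso.toMonoidHom.comp (QuotientGroup.mk' M)
  have hπ : Function.Surjective π := iso.surjective.comp (QuotientGroup.mk'_surjective M)
  have hker : π.ker = M := by
    ext x
    rw [MonoidHom.mem_ker]
    show iso (QuotientGroup.mk' M x) = 1 ↔ _
    rw [map_eq_one_iff iso iso.injective]
    exact QuotientGroup.eq_one_iff x
  have hex : ∃ t, ∃ K : Subgroup H, K.map π = ⊤ ∧ Nat.card K = t :=
    ⟨_, ⊤, by rw [← MonoidHom.range_eq_map, MonoidHom.range_eq_top.2 hπ], rfl⟩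
  classical
  obtain ⟨K, hK, hKc⟩ := Nat.find_spec hex
  have hmin : ∀ K' : Subgroup H, K'.map π = ⊤ → Nat.card K ≤ Nat.card K' := by
    intro K' h'
    rw [hKc]
    exact Nat.find_min' hex ⟨K', h', rfl⟩
  let π' : K →* alternatingGroup (Fin k) := π.comp K.subtype
  have hπ' : Function.Surjective π' := by
    intro x
    have : x ∈ K.map π := by rw [hK]; trivial
    obtain ⟨h, hh, e⟩ := this
    exact ⟨⟨h, hh⟩, e⟩
  have hk' : π'.ker = M.subgroupOf K := by
    rw [← hker]; rfl
  have hne : π'.ker ≠ ⊥ := by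
    intro hb
    apply nonsplit
    refine ⟨K, ?_⟩
    have hd : Disjoint M K := by
      rw [hk', Subgroup.subgroupOf_eq_bot] at hb
      exact hb
    refine Subgroup.isComplement'_of_disjoint_and_mul_eq_univ hd ?_
    rw [Set.eq_univ_iff_forall]
    intro x
    obtain ⟨y, hy⟩ := hπ' (π x)
    have hy' : π (y : H) = π x := hy
    refine Set.mem_mul.2 ⟨x * (y : H)⁻¹, ?_, y, y.2, by group⟩
    show x * (y : H)⁻¹ ∈ M
    rw [← hker, MonoidHom.mem_ker, map_mul, map_inv, hy']; simp
  refine core_bound hk π' hπ' ?_ hne ?_ n (f.comp K.subtype) (hf.comp K.subtype_injective)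
  · intro L hL
    have h1 := hmin (L.map K.subtype) (by rw [Subgroup.map_map]; exact hL)
    rw [Subgroup.card_map_of_injective K.subtype_injective] at h1
    exact Subgroup.eq_top_of_le_card L h1
  · refine Nat.Coprime.coprime_dvd_right ?_ hgcd
    rw [hk']
    have : (M.subgroupOf K).map K.subtype ≤ M := by
      rw [Subgroup.subgroupOf_map_subtype]; exact inf_le_left
    have h1 := Subgroup.card_dvd_of_le this
    rwa [Subgroup.card_map_of_injective K.subtype_injective] at h1
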